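/- arXiv:1408.2348 — 2 statements merged into one kernel-verified Lean document; each statement's English description precedes it below -/
import Mathlib

section
/- Let X be a scheme with an action of a finite group G and x ∈ X a point whose orbit G·x is contained in a G-invariant affine open subscheme. Then the Henselization of the semilocal ring O_{X,Gx} along the ideal of G·x carries a canonical G-action, and there is a G-equivariant isomorphism Spec(O^h_{X,Gx}) ≅ G ×^{S_x} Spec(O^h_{X,x}), where S_x is the set-theoretic stabilizer of x. -/
open scoped Pointwise

universe u

/-- `B` is a henselization of `A` along the ideal `I`:  `B` is henselian along `IB`,
and `B` is universal among `A`-algebras `C` henselian along an ideal containing `IC`. -/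
def IsHenselization (A : Type u) (B : Type u) [CommRing A] [CommRing B] [Algebra A B]
    (I : Ideal A) : Prop :=
  HenselianRing B (I.map (algebraMap A B)) ∧
    ∀ (C : Type u) (_ : CommRing C) (_ : Algebra A C) (J : Ideal C),
      HenselianRing C J → I.map (algebraMap A C) ≤ J →
        ∃! φ : B →ₐ[A] C, (I.map (algebraMap A B)).map (φ : B →+* C) ≤ J

/-- The ring of functions `φ : G → C` satisfying the `H`-equivariance condition
`φ (g * h) = τ h⁻¹ (φ g)`; its spectrum is the induced scheme `G ×^H Spec C`. -/
def IndRing (G : Type*) [Group G] (H : Subgroup G) (C : Type*) [CommRing C]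
    (τ : H →* (C ≃+* C)) : Subring (G → C) where
  carrier := {φ | ∀ (h : H) (g : G), φ (g * h) = τ h⁻¹ (φ g)}
  zero_mem' := by intro h g; simp
  one_mem' := by intro h g; simp
  add_mem' := by intro φ ψ hφ hψ h g; simp [hφ h g, hψ h g]
  mul_mem' := by intro φ ψ hφ hψ h g; simp [hφ h g, hψ h g]
  neg_mem' := by intro φ hφ h g; simp [hφ h g]

/-!
A ring `D` henselian along an ideal `J` lifts idempotents from `D ⧸ J`. Hence, if `J` contains the
image of an intersection of pairwise coprime ideals `I i` of `A`, then `D` decomposes as a product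
whose `i`-th factor sees only `I i`, and so the henselization of `A` along `⨅ i, I i` is the product
of the henselizations along the `I i`. The translates of `I` are indexed by the cosets `G ⧸ H`, and
each is the preimage of `I` under an automorphism of `A`, so its henselization is that of `I` with
a twisted structure map; the product of these is the ring induced from `H` to `G`. The group actions
and the equivariance come from the uniqueness in the universal property.
-/

section HenselianPairs

open Polynomial

variable {R : Type*} [CommRing R] {I : Ideal R}

lemma henselianRing_iff_isUnit :
    HenselianRing R I ↔ I ≤ Ideal.jacobson ⊥ ∧ ∀ f : R[X], f.Monic → ∀ a₀ : R, f.eval a₀ ∈ I →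
      IsUnit (f.derivative.eval a₀) → ∃ a : R, f.IsRoot a ∧ a - a₀ ∈ I := by
  constructor
  · exact fun h => ⟨h.jac, fun f hf a₀ h₀ hu => h.is_henselian f hf a₀ h₀ (hu.map _)⟩
  · rintro ⟨hjac, hroot⟩
    have := isLocalHom_of_le_jacobson_bot I hjac
    exact ⟨hjac, fun f hf a₀ h₀ hu => hroot f hf a₀ h₀ hu.of_map⟩

lemma isIdempotentElem_eq_zero_of_mem_jacobson_bot {e : R} (he : IsIdempotentElem e)
    (hmem : e ∈ Ideal.jacobson (⊥ : Ideal R)) : e = 0 := by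
  have hunit : IsUnit (1 - e) := Ideal.isUnit_of_sub_one_mem_jacobson_bot _ (by simpa using hmem)
  simpa using (IsIdempotentElem.iff_eq_one_of_isUnit hunit).1 he.one_sub

lemma exists_isIdempotentElem_mk_eq (hI : HenselianRing R I) {e : R ⧸ I}
    (he : IsIdempotentElem e) : ∃ e' : R, IsIdempotentElem e' ∧ Ideal.Quotient.mk I e' = e := by
  nontriviality R
  obtain ⟨a, rfl⟩ := Ideal.Quotient.mk_surjective e
  -- The derivative `2X - 1` of `X² - X` is its own inverse at an idempotent.
  have hunit : IsUnit (Ideal.Quotient.mk I ((X ^ 2 - X : R[X]).derivative.eval a)) := by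
    refine IsUnit.of_mul_eq_one (2 * Ideal.Quotient.mk I a - 1) ?_
    have hderiv : (X ^ 2 - X : R[X]).derivative.eval a = 2 * a - 1 := by
      simp [one_add_one_eq_two]
    rw [hderiv, map_sub, map_mul, map_ofNat, map_one]
    linear_combination 4 * he.eq
  obtain ⟨e', hroot, hsub⟩ := hI.is_henselian (X ^ 2 - X)
    (monic_X_pow_sub (by rw [degree_X]; norm_num)) a
    (by rw [← Ideal.Quotient.eq_zero_iff_mem]; simpa [pow_two, sub_eq_zero] using he.eq) hunit
  refine ⟨e', ?_, Ideal.Quotient.eq.2 hsub⟩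
  simpa [IsRoot, IsIdempotentElem, sub_eq_zero, pow_two] using hroot

lemma exists_completeOrthogonalIdempotents_mk_eq (hI : HenselianRing R I) {k : Type*} [Fintype k]
    {e : k → R ⧸ I} (he : CompleteOrthogonalIdempotents e) :
    ∃ e' : k → R, CompleteOrthogonalIdempotents e' ∧ ∀ i, Ideal.Quotient.mk I (e' i) = e i := by
  choose e' hidem hmk using fun i => exists_isIdempotentElem_mk_eq hI (he.idem i)
  have eq_zero : ∀ {x : R}, IsIdempotentElem x → Ideal.Quotient.mk I x = 0 → x = 0 :=
    fun hx hx0 => isIdempotentElem_eq_zero_of_mem_jacobson_bot hx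
      (hI.jac (Ideal.Quotient.eq_zero_iff_mem.1 hx0))
  have hortho : OrthogonalIdempotents e' :=
    ⟨hidem, fun i j hij => eq_zero ((hidem i).mul (hidem j)) (by
      rw [map_mul, hmk, hmk, he.ortho hij])⟩
  have hcomplete : 1 - ∑ i, e' i = 0 :=
    eq_zero hortho.isIdempotentElem_sum.one_sub (by simp [hmk, he.complete])
  exact ⟨e', ⟨hortho, (sub_eq_zero.1 hcomplete).symm⟩, hmk⟩

lemma monic_C_mul_add_C_mul {p q : R[X]} (hp : p.Monic) (hq : q.Monic)
    (hdeg : p.natDegree = q.natDegree) {a b : R} (hab : a + b = 1) :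
    (C a * p + C b * q).Monic := by
  refine monic_of_natDegree_le_of_coeff_eq_one p.natDegree ?_ ?_
  · exact natDegree_add_le_of_degree_le (natDegree_C_mul_le _ _)
      ((natDegree_C_mul_le _ _).trans hdeg.ge)
  · have hq' : q.coeff p.natDegree = 1 := by rw [hdeg, hq.coeff_natDegree]
    rw [coeff_add, coeff_C_mul, coeff_C_mul, hp.coeff_natDegree, hq', mul_one, mul_one, hab]

-- `X ^ n * (X - 1)` has the simple root `1` over any ring.
lemma exists_monic_lift_of_isIdempotentElem {e : R} (he : IsIdempotentElem e)
    {f : (R ⧸ Ideal.span {e})[X]} (hf : f.Monic) (hdeg : f.natDegree ≠ 0) :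
    ∃ (F : R[X]) (n : ℕ), F.Monic ∧ F.map (Ideal.Quotient.mk _) = f ∧
      C e * F = C e * (X ^ n * (X - C 1)) := by
  nontriviality R
  obtain ⟨q, rfl, hqdeg, hq⟩ := lifts_and_natDegree_eq_and_monic
    ((mem_lifts f).2 (map_surjective _ Ideal.Quotient.mk_surjective f)) hf
  obtain ⟨n, hn⟩ := Nat.exists_eq_succ_of_ne_zero hdeg
  have hPmonic : (X ^ n * (X - C 1) : R[X]).Monic := (monic_X_pow n).mul (monic_X_sub_C 1)
  have hPdeg : (X ^ n * (X - C 1) : R[X]).natDegree = n + 1 := by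
    rw [(monic_X_pow n).natDegree_mul (monic_X_sub_C 1), natDegree_X_pow, natDegree_X_sub_C]
  have hmk : Ideal.Quotient.mk (Ideal.span {e}) e = 0 :=
    Ideal.Quotient.eq_zero_iff_mem.2 (Ideal.mem_span_singleton_self e)
  have hCe : (C e * C e : R[X]) = C e := by rw [← C_mul, he.eq]
  refine ⟨C (1 - e) * q + C e * (X ^ n * (X - C 1)), n,
    monic_C_mul_add_C_mul hq hPmonic (by rw [hqdeg, hn, hPdeg]) (sub_add_cancel 1 e), ?_, ?_⟩
  · simp [Polynomial.map_mul, hmk]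
  · rw [C_sub, C_1]
    linear_combination (X ^ n * (X - 1) - q) * hCe

lemma isUnit_of_isUnit_mk_span_singleton {e x : R}
    (hx : IsUnit (Ideal.Quotient.mk (Ideal.span {e}) x)) (hex : e * x = e) : IsUnit x := by
  obtain ⟨u, hu⟩ := isUnit_iff_exists_inv.1 hx
  obtain ⟨u, rfl⟩ := Ideal.Quotient.mk_surjective u
  obtain ⟨t, ht⟩ := Ideal.mem_span_singleton'.1 (Ideal.Quotient.eq.1 hu)
  exact IsUnit.of_mul_eq_one (u - t * e) (by linear_combination -ht - t * hex)

lemma henselianRing_quotient_span_of_isIdempotentElem (hI : HenselianRing R I) {e : R}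
    (he : IsIdempotentElem e) :
    HenselianRing (R ⧸ Ideal.span {e}) (I.map (Ideal.Quotient.mk (Ideal.span {e}))) := by
  set π := Ideal.Quotient.mk (Ideal.span {e})
  have hmem (x : R) : π x ∈ I.map π ↔ (1 - e) * x ∈ I :=
    Ideal.mem_map_span_singleton_iff_of_isIdempotentElem he
  have hπe : π e = 0 := Ideal.Quotient.eq_zero_iff_mem.2 (Ideal.mem_span_singleton_self e)
  have hjac : I.map π ≤ Ideal.jacobson ⊥ := by
    refine Ideal.map_le_iff_le_comap.2 fun x hx => Ideal.mem_jacobson_bot.2 fun y => ?_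
    obtain ⟨y, rfl⟩ := Ideal.Quotient.mk_surjective y
    simpa using (Ideal.mem_jacobson_bot.1 (hI.jac hx) y).map π
  refine henselianRing_iff_isUnit.2 ⟨hjac, fun f hf a₀ h₀ hu => ?_⟩
  obtain ⟨a₀, rfl⟩ := Ideal.Quotient.mk_surjective a₀
  rcases eq_or_ne f.natDegree 0 with hdeg | hdeg
  · obtain rfl : f = 1 := hf.natDegree_eq_zero.1 hdeg
    have one_mem : (1 : R ⧸ Ideal.span {e}) ∈ I.map π := by rwa [eval_one] at h₀
    have one_eq_zero := isIdempotentElem_eq_zero_of_mem_jacobson_bot .one (hjac one_mem)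
    exact ⟨π a₀, eval_one.trans one_eq_zero, by rw [sub_self]; exact zero_mem _⟩
  obtain ⟨F, n, hF, rfl, heF⟩ := exists_monic_lift_of_isIdempotentElem he hf hdeg
  -- `a` agrees with `a₀` modulo `e` and with the simple root `1` modulo `1 - e`.
  set a := (1 - e) * a₀ + e with ha
  have hπa : π a = π a₀ := by simp [a, hπe]
  have hea : e * a = e := by rw [ha]; linear_combination (1 - a₀) * he.eq
  have heval (p : R[X]) : e * p.eval a = e * p.eval 1 := by
    obtain ⟨c, hc⟩ := sub_dvd_eval_sub a 1 p
    linear_combination e * hc + c * hea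
  have heFa : e * F.eval a = 0 := by
    simpa [← heval] using congrArg (eval 1) heF
  have heF'a : e * F.derivative.eval a = e := by
    simpa [← heval] using congrArg (fun p => p.derivative.eval 1) heF
  have hFa : F.eval a ∈ I := by
    rw [← hπa, eval_map_apply, hmem] at h₀
    convert h₀ using 1
    linear_combination heFa
  have hF'a : IsUnit (F.derivative.eval a) := by
    rw [← hπa, derivative_map, eval_map_apply] at hu
    exact isUnit_of_isUnit_mk_span_singleton hu heF'a
  obtain ⟨b, hroot, hb⟩ := hI.is_henselian F hF a hFa (hF'a.map _)
  refine ⟨π b, hroot.map, ?_⟩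
  rw [← hπa, ← map_sub]
  exact Ideal.mem_map_of_mem π hb

lemma henselianRing_pi {k : Type*} {R : k → Type*} [∀ i, CommRing (R i)] {I : ∀ i, Ideal (R i)}
    (hI : ∀ i, HenselianRing (R i) (I i)) : HenselianRing (∀ i, R i) (Ideal.pi I) := by
  have heval (i : k) (p : (∀ i, R i)[X]) (x : ∀ i, R i) :
      (p.map (Pi.evalRingHom R i)).eval (x i) = p.eval x i :=
    eval_map_apply (Pi.evalRingHom R i) x
  refine henselianRing_iff_isUnit.2 ⟨fun x hx => ?_, fun f hf a₀ h₀ hu => ?_⟩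
  · exact Ideal.mem_jacobson_bot.2 fun y =>
      Pi.isUnit_iff.2 fun i => Ideal.mem_jacobson_bot.1 ((hI i).jac (hx i)) (y i)
  · have hroot (i : k) : ∃ b, (f.map (Pi.evalRingHom R i)).IsRoot b ∧ b - a₀ i ∈ I i := by
      refine (henselianRing_iff_isUnit.1 (hI i)).2 _ (hf.map _) (a₀ i) ?_ ?_
      · rw [heval]
        exact h₀ i
      · rw [derivative_map, heval]
        exact Pi.isUnit_iff.1 hu i
    choose b hb hba₀ using hroot
    exact ⟨b, funext fun i => (heval i f b).symm.trans (hb i), hba₀⟩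

end HenselianPairs

section IdealsAndProducts

variable {A : Type*} [CommRing A] {k : Type*}

lemma ideal_map_pi [Finite k] {C : k → Type*} [∀ i, CommRing (C i)] (K : Ideal A)
    (f : ∀ i, A →+* C i) : K.map (RingHom.pi f) = Ideal.pi fun i => K.map (f i) := by
  refine Ideal.piOrderIso.injective (funext fun i => ?_)
  have hcomp : (Pi.evalRingHom C i).comp (RingHom.pi f) = f i := rfl
  simp [Ideal.piOrderIso, Ideal.map_map, Ideal.map_evalRingHom_pi, hcomp]

lemma map_eq_top_of_isCoprime {C : Type*} [CommRing C] {I K : Ideal A} (h : IsCoprime I K)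
    {f : A →+* C} (hf : I.map f ≤ Ideal.jacobson ⊥) : K.map f = ⊤ := by
  obtain ⟨x, hx, y, hy, hxy⟩ := Ideal.isCoprime_iff_exists.1 h
  refine Ideal.eq_top_of_isUnit_mem _ (Ideal.mem_map_of_mem f hy) ?_
  refine Ideal.isUnit_of_sub_one_mem_jacobson_bot _ ?_
  rw [← map_one f, ← hxy, map_add, sub_add_cancel_right]
  exact neg_mem (hf (Ideal.mem_map_of_mem f hx))

lemma map_iInf_eq_of_pairwise_isCoprime [Finite k] {C : Type*} [CommRing C] {I : k → Ideal A}
    (hI : Pairwise fun i j => IsCoprime (I i) (I j)) {f : A →+* C} {j : k}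
    (hf : (I j).map f ≤ Ideal.jacobson ⊥) : (⨅ i, I i).map f = (I j).map f := by
  classical
  have := Fintype.ofFinite k
  have hprod : ⨅ i, I i = ∏ i, I i := by
    simpa using (Ideal.prod_eq_iInf_of_pairwise_isCoprime (s := Finset.univ) (J := I)
      fun i _ j _ hij => hI hij).symm
  rw [hprod, ← Ideal.mapHom_apply, map_prod]
  exact Finset.prod_eq_single j
    (fun i _ hij => (map_eq_top_of_isCoprime (hI hij.symm) hf).trans Ideal.one_eq_top.symm)
    fun hj => absurd (Finset.mem_univ j) hj

lemma exists_eq_comp_evalRingHom [Finite k] {C : k → Type*} [∀ i, CommRing (C i)] {D : Type*}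
    [CommRing D] {K : Ideal A} {f : ∀ i, A →+* C i} {j : k} (hK : ∀ i, i ≠ j → K.map (f i) = ⊤)
    {φ : (∀ i, C i) →+* D} (hφ : K.map (φ.comp (RingHom.pi f)) ≤ Ideal.jacobson ⊥) :
    ∃ ψ : C j →+* D, φ = ψ.comp (Pi.evalRingHom C j) := by
  classical
  set e : ∀ i, C i := 1 - Pi.single j 1 with he
  have hidem : IsIdempotentElem e := by
    refine IsIdempotentElem.one_sub ?_
    simp [IsIdempotentElem, ← Pi.single_mul]
  have hmem : e ∈ K.map (RingHom.pi f) := by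
    rw [ideal_map_pi]
    intro i
    rcases eq_or_ne i j with rfl | hij
    · simp [he]
    · simp [hK i hij]
  have hzero : φ e = 0 := by
    refine isIdempotentElem_eq_zero_of_mem_jacobson_bot (hidem.map φ) (hφ ?_)
    rw [← Ideal.map_map]
    exact Ideal.mem_map_of_mem φ hmem
  have hker : RingHom.ker (Pi.evalRingHom C j) ≤ RingHom.ker φ := by
    intro x hx
    have hxe : x = e * x := by
      funext i
      rcases eq_or_ne i j with rfl | hij
      · simpa [he] using hx
      · simp [he, hij]
    rw [RingHom.mem_ker, hxe, map_mul, hzero, zero_mul]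
  have hsurj : Function.Surjective (Pi.evalRingHom C j) := Function.surjective_eval j
  exact ⟨_, (RingHom.liftOfSurjective_comp _ hsurj ⟨φ, hker⟩).symm⟩

lemma exists_completeOrthogonalIdempotents_mul_mem [Fintype k] {D : Type*} [CommRing D]
    {J : Ideal D} (hJ : HenselianRing D J) {I : k → Ideal A}
    (hI : Pairwise fun i j => IsCoprime (I i) (I j)) {g : A →+* D} (hg : (⨅ i, I i).map g ≤ J) :
    ∃ e : k → D, CompleteOrthogonalIdempotents e ∧ ∀ i, ∀ x ∈ I i, g x * e i ∈ J := by
  classical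
  let equiv := Ideal.quotientInfRingEquivPiQuotient I hI
  let γ : (∀ i, A ⧸ I i) →+* D ⧸ J :=
    (Ideal.quotientMap J g (Ideal.map_le_iff_le_comap.1 hg)).comp equiv.symm
  have hγ (a : A) : γ (fun i => Ideal.Quotient.mk (I i) a) = Ideal.Quotient.mk J (g a) := by
    have hequiv : equiv.symm (fun i => Ideal.Quotient.mk (I i) a) = Ideal.Quotient.mk _ a :=
      equiv.symm_apply_eq.2 rfl
    simp [γ, hequiv]
  obtain ⟨e, he, hmk⟩ := exists_completeOrthogonalIdempotents_mk_eq hJ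
    ((CompleteOrthogonalIdempotents.single fun i => A ⧸ I i).map γ)
  refine ⟨e, he, fun i x hx => ?_⟩
  have hsingle : (fun j => Ideal.Quotient.mk (I j) x) * Pi.single i 1 = 0 := by
    funext j
    rcases eq_or_ne j i with rfl | hij
    · simpa using Ideal.Quotient.eq_zero_iff_mem.2 hx
    · simp [hij]
  rw [← Ideal.Quotient.eq_zero_iff_mem, map_mul, hmk, ← hγ, Function.comp_apply, ← map_mul,
    hsingle, map_zero]

lemma exists_bijective_pi_mk [Finite k] {D : Type*} [CommRing D] {J : Ideal D}
    (hJ : HenselianRing D J) {I : k → Ideal A} (hI : Pairwise fun i j => IsCoprime (I i) (I j))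
    {g : A →+* D} (hg : (⨅ i, I i).map g ≤ J) :
    ∃ K : k → Ideal D, Function.Bijective (RingHom.pi fun i => Ideal.Quotient.mk (K i)) ∧
      (∀ i, HenselianRing (D ⧸ K i) (J.map (Ideal.Quotient.mk (K i)))) ∧
      ∀ i, (I i).map ((Ideal.Quotient.mk (K i)).comp g) ≤ J.map (Ideal.Quotient.mk (K i)) := by
  have := Fintype.ofFinite k
  obtain ⟨e, he, hmem⟩ := exists_completeOrthogonalIdempotents_mul_mem hJ hI hg
  refine ⟨fun i => Ideal.span {1 - e i}, he.bijective_pi, fun i =>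
    henselianRing_quotient_span_of_isIdempotentElem hJ (he.idem i).one_sub, fun i => ?_⟩
  refine Ideal.map_le_iff_le_comap.2 fun x hx => ?_
  have hmk : Ideal.Quotient.mk (Ideal.span {1 - e i}) (g x)
      = Ideal.Quotient.mk (Ideal.span {1 - e i}) (g x * e i) :=
    Ideal.Quotient.eq.2 (Ideal.mem_span_singleton'.2 ⟨g x, mul_one_sub (g x) (e i)⟩)
  rw [Ideal.mem_comap, RingHom.comp_apply, hmk]
  exact Ideal.mem_map_of_mem _ (hmem i x hx)

end IdealsAndProducts

/-- The ring homomorphism `f : A →+* B` is a henselization of `A` along the ideal `I`. This is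
`IsHenselization` for a bare homomorphism instead of an algebra structure, so that `f` can be
composed with automorphisms of `A`; the condition on the ideals there is automatic for a lift. -/
structure IsHenselizationHom {A : Type*} {B : Type u} [CommRing A] [CommRing B] (f : A →+* B)
    (I : Ideal A) : Prop where
  henselianRing : HenselianRing B (I.map f)
  existsUnique_comp_eq {D : Type u} [CommRing D] {g : A →+* D} {J : Ideal D} :
    HenselianRing D J → I.map g ≤ J → ∃! φ : B →+* D, φ.comp f = g

lemma IsHenselization.isHenselizationHom {A B : Type u} [CommRing A] [CommRing B] [Algebra A B]
    {I : Ideal A} (h : IsHenselization A B I) : IsHenselizationHom (algebraMap A B) I := by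
  refine ⟨h.1, fun {D} _ g J hJ hg => ?_⟩
  let _ : Algebra A D := g.toAlgebra
  have map_le (φ : B →ₐ[A] D) : (I.map (algebraMap A B)).map (φ : B →+* D) ≤ J := by
    rwa [Ideal.map_map, φ.comp_algebraMap]
  obtain ⟨φ, -, hφ⟩ := h.2 D _ _ J hJ hg
  refine ⟨φ, φ.comp_algebraMap, fun ψ hψ => ?_⟩
  let ψ' : B →ₐ[A] D := { ψ with commutes' := RingHom.congr_fun hψ }
  exact congrArg AlgHom.toRingHom (hφ ψ' (map_le ψ'))

namespace IsHenselizationHom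

section UniversalProperty

variable {A : Type*} [CommRing A] {B : Type u} [CommRing B] {f : A →+* B} {I : Ideal A}

lemma hom_ext (h : IsHenselizationHom f I) {D : Type u} [CommRing D] {J : Ideal D}
    (hJ : HenselianRing D J) {φ ψ : B →+* D} (hφJ : I.map (φ.comp f) ≤ J)
    (heq : φ.comp f = ψ.comp f) : φ = ψ :=
  (h.existsUnique_comp_eq hJ hφJ).unique rfl heq.symm

lemma exists_ringEquiv (h : IsHenselizationHom f I) {B' : Type u} [CommRing B'] {f' : A →+* B'}
    (h' : IsHenselizationHom f' I) : ∃ e : B ≃+* B', ∀ a, e (f a) = f' a := by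
  obtain ⟨φ, hφ, -⟩ := h.existsUnique_comp_eq h'.henselianRing le_rfl
  obtain ⟨ψ, hψ, -⟩ := h'.existsUnique_comp_eq h.henselianRing le_rfl
  have hψφ : (ψ.comp φ).comp f = f := by rw [RingHom.comp_assoc, hφ, hψ]
  have hφψ : (φ.comp ψ).comp f' = f' := by rw [RingHom.comp_assoc, hψ, hφ]
  exact ⟨RingEquiv.ofRingHom φ ψ (h'.hom_ext h'.henselianRing (by rw [hφψ]) hφψ)
    (h.hom_ext h.henselianRing (by rw [hψφ]) hψφ), RingHom.congr_fun hφ⟩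

lemma comp_ringEquiv (h : IsHenselizationHom f I) {A' : Type*} [CommRing A'] (s : A' ≃+* A) :
    IsHenselizationHom (f.comp (s : A' →+* A)) (I.comap (s : A' →+* A)) := by
  have hmap : (I.comap (s : A' →+* A)).map (s : A' →+* A) = I :=
    Ideal.map_comap_of_surjective _ s.surjective I
  refine ⟨by rw [← Ideal.map_map, hmap]; exact h.henselianRing, fun {D} _ g J hJ hg => ?_⟩
  have hcomp (φ : B →+* D) :
      φ.comp (f.comp (s : A' →+* A)) = g ↔ φ.comp f = g.comp (s.symm : A →+* A') := by
    simp only [RingHom.ext_iff, RingHom.comp_apply, RingHom.coe_coe]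
    exact ⟨fun hφ a => by simpa using hφ (s.symm a), fun hφ a => by simpa using hφ (s a)⟩
  simp only [hcomp]
  refine h.existsUnique_comp_eq hJ ?_
  have hsymm : (s.symm : A →+* A').comp (s : A' →+* A) = RingHom.id A' := by ext; simp
  rwa [← hmap, Ideal.map_map, RingHom.comp_assoc, hsymm, RingHom.comp_id]

lemma comp_algebraMap {S : Type*} [CommRing S] [Algebra A S] (M : Submonoid A)
    [IsLocalization M S] {f : S →+* B} (h : IsHenselizationHom f (I.map (algebraMap A S)))
    (hM : ∀ s ∈ M, IsUnit (Ideal.Quotient.mk I s)) :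
    IsHenselizationHom (f.comp (algebraMap A S)) I := by
  refine ⟨by rw [← Ideal.map_map]; exact h.henselianRing, fun {D} _ g J hJ hg => ?_⟩
  have hunit (s : M) : IsUnit (g s) := by
    have := isLocalHom_of_le_jacobson_bot J hJ.jac
    refine IsUnit.of_map (Ideal.Quotient.mk J) _ ?_
    exact (hM s s.2).map (Ideal.quotientMap J g (Ideal.map_le_iff_le_comap.1 hg))
  have hcomp (φ : B →+* D) :
      φ.comp (f.comp (algebraMap A S)) = g ↔ φ.comp f = IsLocalization.lift hunit := by
    rw [← RingHom.comp_assoc]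
    exact ⟨fun hφ => IsLocalization.ringHom_ext M (by rw [hφ, IsLocalization.lift_comp]),
      fun hφ => by rw [hφ, IsLocalization.lift_comp]⟩
  simp only [hcomp]
  exact h.existsUnique_comp_eq hJ (by rwa [Ideal.map_map, IsLocalization.lift_comp])

lemma exists_action (h : IsHenselizationHom f I) {Γ : Type*} [Group Γ] [MulSemiringAction Γ A]
    (hI : ∀ γ : Γ, I.comap (MulSemiringAction.toRingHom Γ A γ) = I) :
    ∃ τ : Γ →* (B ≃+* B), ∀ γ a, τ γ (f a) = f (γ • a) := by
  have twist (γ : Γ) : IsHenselizationHom (f.comp (MulSemiringAction.toRingHom Γ A γ)) I := by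
    have := h.comp_ringEquiv (MulSemiringAction.toRingEquiv Γ A γ)
    rwa [← hI γ]
  choose t ht using fun γ => h.exists_ringEquiv (twist γ)
  have ext_on {s s' : B ≃+* B} {γ : Γ} (hs : ∀ a, s (f a) = f (γ • a))
      (hs' : ∀ a, s' (f a) = f (γ • a)) : s = s' := by
    have hcomp : (s : B →+* B).comp f = f.comp (MulSemiringAction.toRingHom Γ A γ) :=
      RingHom.ext hs
    refine RingEquiv.toRingHom_injective (h.hom_ext (twist γ).henselianRing ?_ ?_)
    · exact (congrArg I.map hcomp).le
    · exact hcomp.trans (RingHom.ext hs').symm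
  exact ⟨{ toFun := t
           map_one' := ext_on (ht 1) (by simp)
           map_mul' := fun γ γ' => ext_on (ht (γ * γ')) fun a =>
             (congrArg (t γ) (ht γ' a)).trans (by simp [ht, mul_smul]) }, ht⟩

end UniversalProperty

section Product

variable {A : Type*} [CommRing A] {k : Type u} [Finite k] {I : k → Ideal A}
  {C : k → Type u} [∀ i, CommRing (C i)] {f : ∀ i, A →+* C i}

lemma existsUnique_comp_pi_eq (h : ∀ i, IsHenselizationHom (f i) (I i))
    (hI : Pairwise fun i j => IsCoprime (I i) (I j)) {j : k} {D : Type u} [CommRing D]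
    {g : A →+* D} {J : Ideal D} (hJ : HenselianRing D J) (hg : (I j).map g ≤ J) :
    ∃! φ : (∀ i, C i) →+* D, φ.comp (RingHom.pi f) = g := by
  obtain ⟨ψ, hψ, hψ_unique⟩ := (h j).existsUnique_comp_eq hJ hg
  refine ⟨ψ.comp (Pi.evalRingHom C j), hψ, fun φ hφ => ?_⟩
  have hI_top (i : k) (hij : i ≠ j) : (I j).map (f i) = ⊤ :=
    map_eq_top_of_isCoprime (hI hij) (h i).henselianRing.jac
  obtain ⟨ψ', rfl⟩ := exists_eq_comp_evalRingHom hI_top (by rw [hφ]; exact hg.trans hJ.jac)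
  rw [hψ_unique ψ' hφ]

theorem pi (h : ∀ i, IsHenselizationHom (f i) (I i))
    (hI : Pairwise fun i j => IsCoprime (I i) (I j)) :
    IsHenselizationHom (RingHom.pi f) (⨅ i, I i) := by
  refine ⟨?_, fun {D} _ g J hJ hg => ?_⟩
  · have hmap (i : k) : (⨅ i, I i).map (f i) = (I i).map (f i) :=
      map_iInf_eq_of_pairwise_isCoprime hI (h i).henselianRing.jac
    simp only [ideal_map_pi, hmap]
    exact henselianRing_pi fun i => (h i).henselianRing
  · obtain ⟨K, hK, hJK, hIK⟩ := exists_bijective_pi_mk hJ hI hg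
    let E : D ≃+* ∀ i, D ⧸ K i := RingEquiv.ofBijective _ hK
    choose Φ hΦ hΦ_unique using fun i => existsUnique_comp_pi_eq h hI (hJK i) (hIK i)
    refine ⟨(E.symm : (∀ i, D ⧸ K i) →+* D).comp (RingHom.pi Φ), ?_, fun φ hφ => ?_⟩
    · ext a
      exact E.symm_apply_eq.2 (funext fun i => RingHom.congr_fun (hΦ i) a)
    · ext c
      refine E.eq_symm_apply.2 (funext fun i => ?_)
      have hφi : ((Ideal.Quotient.mk (K i)).comp φ).comp (RingHom.pi f)
          = (Ideal.Quotient.mk (K i)).comp g := by rw [RingHom.comp_assoc, hφ]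
      exact RingHom.congr_fun (hΦ_unique i _ hφi) c

end Product

end IsHenselizationHom

section Orbit

variable {G A : Type*} [Group G] [CommRing A] [MulSemiringAction G A] {I : Ideal A}
  {H : Subgroup G}

lemma isCoprime_comap_toRingHom {g g' : G}
    (h : IsCoprime (I.comap (MulSemiringAction.toRingHom G A (g * g'⁻¹))) I) :
    IsCoprime (I.comap (MulSemiringAction.toRingHom G A g))
      (I.comap (MulSemiringAction.toRingHom G A g')) := by
  obtain ⟨x, hx, y, hy, hxy⟩ := Ideal.isCoprime_iff_exists.1 h
  refine Ideal.isCoprime_iff_exists.2 ⟨g'⁻¹ • x, ?_, g'⁻¹ • y, ?_, ?_⟩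
  · simpa [Ideal.mem_comap, mul_smul] using hx
  · simpa [Ideal.mem_comap] using hy
  · rw [← smul_add, hxy, smul_one]

lemma pairwise_isCoprime_comap_out_inv
    (hI : ∀ g ∉ H, IsCoprime (I.comap (MulSemiringAction.toRingHom G A g)) I) :
    Pairwise fun p q : G ⧸ H => IsCoprime (I.comap (MulSemiringAction.toRingHom G A p.out⁻¹))
      (I.comap (MulSemiringAction.toRingHom G A q.out⁻¹)) := by
  refine fun p q hpq => isCoprime_comap_toRingHom (hI _ fun hmem => hpq ?_)
  rw [inv_inv, ← QuotientGroup.eq, QuotientGroup.out_eq', QuotientGroup.out_eq'] at hmem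
  exact hmem

lemma iInf_comap_out_inv (hI : ∀ h ∈ H, I.comap (MulSemiringAction.toRingHom G A h) = I) :
    ⨅ q : G ⧸ H, I.comap (MulSemiringAction.toRingHom G A q.out⁻¹)
      = ⨅ g : G, I.comap (MulSemiringAction.toRingHom G A g) := by
  refine le_antisymm (le_iInf fun g => ?_) (le_iInf fun q => iInf_le _ _)
  obtain ⟨h, hout⟩ := QuotientGroup.mk_out_eq_mul H g⁻¹
  refine (iInf_le _ ((g⁻¹ : G) : G ⧸ H)).trans_eq ?_
  rw [hout, mul_inv_rev, inv_inv]
  conv_rhs => rw [← hI _ (inv_mem h.2)]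
  ext a
  simp [Ideal.mem_comap, mul_smul]

lemma comap_iInf_comap_toRingHom (γ : G) :
    (⨅ g : G, I.comap (MulSemiringAction.toRingHom G A g)).comap
        (MulSemiringAction.toRingHom G A γ)
      = ⨅ g : G, I.comap (MulSemiringAction.toRingHom G A g) := by
  rw [Ideal.comap_iInf, ← (Equiv.mulRight γ⁻¹).iInf_comp]
  refine iInf_congr fun g => ?_
  ext a
  simp [Ideal.mem_comap, mul_smul]

end Orbit

section InducedRing

variable {G : Type*} [Group G] {H : Subgroup G} {C : Type*} [CommRing C] {τ : H →* (C ≃+* C)}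

lemma IndRing.apply_eq (φ : IndRing G H C τ) {g g' : G} {h : H} (hg : g' = g * h) :
    (φ : G → C) g = τ h ((φ : G → C) g') := by
  rw [hg, φ.2 h g, map_inv]
  exact ((τ h).apply_symm_apply _).symm

lemma IndRing.exists_apply_out_eq (f : G ⧸ H → C) :
    ∃ φ : IndRing G H C τ, ∀ q : G ⧸ H, (φ : G → C) q.out = f q := by
  choose c hc using QuotientGroup.mk_out_eq_mul H
  refine ⟨⟨fun g => τ (c g) (f g), fun h g => ?_⟩, fun q => ?_⟩
  · have hmk : ((g * h : G) : G ⧸ H) = g := QuotientGroup.mk_mul_of_mem g h.2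
    have hch : c (g * h) = h⁻¹ * c g := by
      refine Subtype.ext (mul_left_cancel (a := g * h) ?_)
      rw [← hc, hmk, hc]
      simp [mul_assoc]
    simp only [hmk, hch, map_mul, RingAut.mul_apply]
  · have hcq : c q.out = 1 := by
      have := hc q.out
      simpa using this
    simp [hcq]

/-- Evaluation at the chosen representatives of the cosets identifies the induced ring with a
product of copies of `C`. -/
noncomputable def IndRing.piEquiv (τ : H →* (C ≃+* C)) :
    IndRing G H C τ ≃+* (G ⧸ H → C) :=
  RingEquiv.ofBijective
    ((RingHom.pi fun q : G ⧸ H => Pi.evalRingHom (fun _ => C) q.out).comp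
      (IndRing G H C τ).subtype)
    ⟨fun φ φ' hφ => by
      ext g
      obtain ⟨h, hg⟩ := QuotientGroup.mk_out_eq_mul H g
      rw [apply_eq φ hg, apply_eq φ' hg]
      exact congrArg (τ h) (congrFun hφ g),
    fun f => (exists_apply_out_eq f).imp fun _ hφ => funext hφ⟩

end InducedRing

section Equivariance

variable {G : Type u} [Group G] {H : Subgroup G} {A : Type*} [CommRing A]
  [MulSemiringAction G A] {I : Ideal A} {B C : Type u} [CommRing B] [CommRing C]
  {f' : A →+* B} {f : A →+* C}

lemma IsHenselizationHom.comp_toRingHom (hf : IsHenselizationHom f I) (g : G) :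
    IsHenselizationHom (f.comp (MulSemiringAction.toRingHom G A g))
      (I.comap (MulSemiringAction.toRingHom G A g)) :=
  hf.comp_ringEquiv (MulSemiringAction.toRingEquiv G A g)

lemma IsHenselizationHom.pi_orbit [H.FiniteIndex] (hf : IsHenselizationHom f I)
    (hH : ∀ h ∈ H, I.comap (MulSemiringAction.toRingHom G A h) = I)
    (hI : ∀ g ∉ H, IsCoprime (I.comap (MulSemiringAction.toRingHom G A g)) I) :
    IsHenselizationHom
      (RingHom.pi fun q : G ⧸ H => f.comp (MulSemiringAction.toRingHom G A q.out⁻¹))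
      (⨅ g : G, I.comap (MulSemiringAction.toRingHom G A g)) := by
  rw [← iInf_comap_out_inv hH]
  exact .pi (fun q => hf.comp_toRingHom q.out⁻¹) (pairwise_isCoprime_comap_out_inv hI)

lemma exists_ringEquiv_indRing [H.FiniteIndex]
    (hH : ∀ h ∈ H, I.comap (MulSemiringAction.toRingHom G A h) = I)
    (hI : ∀ g ∉ H, IsCoprime (I.comap (MulSemiringAction.toRingHom G A g)) I)
    (hf' : IsHenselizationHom f' (⨅ g : G, I.comap (MulSemiringAction.toRingHom G A g)))
    (hf : IsHenselizationHom f I) {τ : H →* (C ≃+* C)}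
    (hτ : ∀ h a, τ h (f a) = f ((h : G) • a)) :
    ∃ ι : B ≃+* IndRing G H C τ, ∀ a g, (ι (f' a) : G → C) g = f (g⁻¹ • a) := by
  obtain ⟨e, he⟩ := hf'.exists_ringEquiv (hf.pi_orbit hH hI)
  refine ⟨e.trans (IndRing.piEquiv τ).symm, fun a g => ?_⟩
  let orbitMap : IndRing G H C τ := ⟨fun g => f (g⁻¹ • a), fun h g => by
    simp only [hτ, mul_inv_rev, mul_smul, Subgroup.coe_inv]⟩
  have hι : (IndRing.piEquiv τ).symm (e (f' a)) = orbitMap :=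
    (IndRing.piEquiv τ).symm_apply_eq.2 (he a)
  exact congrFun (congrArg Subtype.val hι) g

-- Both sides are values at `b` of homomorphisms `B →+* C` that agree on `A`.
lemma ringEquiv_indRing_apply_action
    (hf' : IsHenselizationHom f' (⨅ g : G, I.comap (MulSemiringAction.toRingHom G A g)))
    (hf : IsHenselizationHom f I) {τ : H →* (C ≃+* C)} {ι : B ≃+* IndRing G H C τ}
    (hι : ∀ a g, (ι (f' a) : G → C) g = f (g⁻¹ • a)) {σ : G →* (B ≃+* B)}
    (hσ : ∀ g a, σ g (f' a) = f' (g • a)) (g : G) (b : B) (g' : G) :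
    (ι (σ g b) : G → C) g' = (ι b : G → C) (g⁻¹ * g') := by
  let eval (γ : G) : B →+* C :=
    (Pi.evalRingHom (fun _ => C) γ).comp ((IndRing G H C τ).subtype.comp (ι : B →+* _))
  have heval (γ : G) : (eval γ).comp f' = f.comp (MulSemiringAction.toRingHom G A γ⁻¹) :=
    RingHom.ext fun a => hι a γ
  have hσ_eval : (eval (g⁻¹ * g')).comp f' = ((eval g').comp (σ g : B →+* B)).comp f' := by
    refine RingHom.ext fun a => ?_
    calc (ι (f' a) : G → C) (g⁻¹ * g') = f ((g⁻¹ * g')⁻¹ • a) := hι a _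
      _ = f (g'⁻¹ • g • a) := by rw [mul_inv_rev, inv_inv, mul_smul]
      _ = (ι (f' (g • a)) : G → C) g' := (hι (g • a) g').symm
      _ = (ι (σ g (f' a)) : G → C) g' := by rw [hσ]
  have heq := hf'.hom_ext (hf.comp_toRingHom (g⁻¹ * g')⁻¹).henselianRing
    (by rw [heval]; exact Ideal.map_mono (iInf_le _ _)) hσ_eval
  exact (RingHom.congr_fun heq b).symm

end Equivariance

lemma isCoprime_comap_of_ne {A A' : Type*} [CommRing A] [CommRing A'] {I : Ideal A} [I.IsMaximal]
    {m : Ideal A'} [m.IsMaximal] {s : A →+* A'} (hs : Function.Surjective s) (hne : m.comap s ≠ I) :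
    IsCoprime (m.comap s) I := by
  have := Ideal.comap_isMaximal_of_surjective s hs (K := m)
  exact Ideal.isCoprime_of_isMaximal hne

lemma IsHenselizationHom.comp_algebraMap_atPrime {A : Type*} [CommRing A] {m : Ideal A}
    [m.IsMaximal] {C : Type u} [CommRing C] {f : Localization.AtPrime m →+* C}
    (hf : IsHenselizationHom f (IsLocalRing.maximalIdeal (Localization.AtPrime m))) :
    IsHenselizationHom (f.comp (algebraMap A (Localization.AtPrime m))) m := by
  let _ := Ideal.Quotient.field m
  rw [← Localization.AtPrime.map_eq_maximalIdeal] at hf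
  exact hf.comp_algebraMap m.primeCompl fun s hs =>
    IsUnit.mk0 _ (mt Ideal.Quotient.eq_zero_iff_mem.1 hs)

theorem equivariant_henselization_along_orbit_general (G : Type u) [Group G] (A : Type*)
    [CommRing A] [MulSemiringAction G A] (I : Ideal A) (H : Subgroup G) [H.FiniteIndex]
    (hH : ∀ h ∈ H, I.comap (MulSemiringAction.toRingHom G A h) = I)
    (hI : ∀ g ∉ H, IsCoprime (I.comap (MulSemiringAction.toRingHom G A g)) I)
    (B : Type u) [CommRing B] (f' : A →+* B)
    (hf' : IsHenselizationHom f' (⨅ g : G, I.comap (MulSemiringAction.toRingHom G A g)))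
    (C : Type u) [CommRing C] (f : A →+* C) (hf : IsHenselizationHom f I) :
    ∃ (σ : G →* (B ≃+* B)) (τ : H →* (C ≃+* C)) (ι : B ≃+* IndRing G H C τ),
      (∀ g a, σ g (f' a) = f' (g • a)) ∧ (∀ h a, τ h (f a) = f ((h : G) • a)) ∧
      (∀ a g, (ι (f' a) : G → C) g = f (g⁻¹ • a)) ∧
      ∀ g b g', (ι (σ g b) : G → C) g' = (ι b : G → C) (g⁻¹ * g') := by
  obtain ⟨σ, hσ⟩ := hf'.exists_action comap_iInf_comap_toRingHom
  obtain ⟨τ, hτ⟩ := hf.exists_action fun h : H => hH h h.2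
  obtain ⟨ι, hι⟩ := exists_ringEquiv_indRing hH hI hf' hf hτ
  exact ⟨σ, τ, ι, hσ, hτ, hι, ringEquiv_indRing_apply_action hf' hf hι hσ⟩

/-- Let `G` be a finite group acting on a scheme `X` and let `x` be a point
whose orbit is contained in an invariant affine open `Spec A`; algebraically, `A` is the
semilocal ring `O_{X,Gx}`, i.e. the maximal ideals of `A` form a single `G`-orbit `G·m`,
and `S_x = H` is the stabilizer of `m`.  Then the henselization `B` of `A` along the ideal
`⨅_{g} g·m` of the orbit carries a canonical `G`-action compatible with the action on `A`,
and there is a `G`-equivariant isomorphism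
`Spec B ≅ G ×^H Spec C`, i.e. an equivariant ring isomorphism `B ≅ Ind_H^G C`,
where `C` is the henselization of the local ring `O_{X,x} = A_m`. -/
theorem equivariant_henselization_along_orbit
    (G : Type u) [Group G] [Finite G] (A : Type u) [CommRing A] [MulSemiringAction G A]
    (m : Ideal A) [m.IsMaximal]
    (horb : ∀ m' : Ideal A, m'.IsMaximal →
      ∃ g : G, m' = Ideal.comap (MulSemiringAction.toRingHom G A g) m)
    (H : Subgroup G)
    (hH : ∀ g : G, g ∈ H ↔ Ideal.comap (MulSemiringAction.toRingHom G A g) m = m)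
    (B : Type u) [CommRing B] [Algebra A B]
    (hB : IsHenselization A B (⨅ g : G, Ideal.comap (MulSemiringAction.toRingHom G A g) m))
    (C : Type u) [CommRing C] [Algebra (Localization.AtPrime m) C]
    (hC : IsHenselization (Localization.AtPrime m) C
      (IsLocalRing.maximalIdeal (Localization.AtPrime m))) :
    ∃ (σ : G →* (B ≃+* B)) (τ : H →* (C ≃+* C))
      (ι : B ≃+* (IndRing G H C τ)),
      (∀ (g : G) (a : A), σ g (algebraMap A B a) = algebraMap A B (g • a)) ∧
      (∀ (h : H) (a : A),
        τ h ((algebraMap (Localization.AtPrime m) C) (algebraMap A (Localization.AtPrime m) a))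
          = (algebraMap (Localization.AtPrime m) C)
              (algebraMap A (Localization.AtPrime m) ((h : G) • a))) ∧
      (∀ (a : A) (g : G),
        ((ι (algebraMap A B a) : G → C) g)
          = (algebraMap (Localization.AtPrime m) C)
              (algebraMap A (Localization.AtPrime m) (g⁻¹ • a))) ∧
      (∀ (g : G) (b : B) (g' : G),
        ((ι (σ g b) : G → C) g') = ((ι b : G → C) (g⁻¹ * g'))) := by
  refine equivariant_henselization_along_orbit_general G A m H (fun h => (hH h).1) (fun g hg => ?_)
    B _ hB.isHenselizationHom C _ hC.isHenselizationHom.comp_algebraMap_atPrime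
  exact isCoprime_comap_of_ne (MulAction.surjective g) (mt (hH g).2 hg)
end

section
/- Let G be a finite group acting on a scheme X over a field such that the geometric quotient π : X → X/G exists as a scheme, and let x ∈ X. Then the quotient (X^h_{Gx})/G of the equivariant Henselization along the orbit G·x is naturally isomorphic to the Henselization (X/G)^h_{[x]} of X/G at the image point [x]. -/
/-!
Write `R = Aᴳ`. The maximal ideals of `A` form one orbit, so the ideal of the orbit is the Jacobson
radical of `A`, and as `A` is integral over `R` the ring `R` is local. Let `H` be the henselization
of `R`, constructed as the filtered colimit of the local rings of residually trivial étale
neighbourhoods; it is a flat `R`-algebra. The base change `A ⊗[R] H` is integral over the henselian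
local ring `H`, and an algebra integral over a henselian local ring is henselian along every ideal
contained in its Jacobson radical, because idempotents lift: factorizations into coprime monic
factors lift from the residue field of `H`. Hence `A ⊗[R] H` has the universal property of the
henselization of `A` along the orbit, so it is `B`, equivariantly for the action on the first
factor. Finally `Aᴳ` is the kernel of `A → ∏ A`, `a ↦ (g • a - a)_g`, and by flatness of `H` this
kernel commutes with base change: `Bᴳ = (A ⊗[R] H)ᴳ = Aᴳ ⊗[R] H = H`.
-/

universe u

/-- The subring of `G`-fixed elements. -/
def fixedSubring (G R : Type*) [Group G] [CommRing R] [MulSemiringAction G R] : Subring R where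
  carrier := {a | ∀ g : G, g • a = a}
  zero_mem' := fun g => smul_zero g
  one_mem' := fun g => smul_one g
  add_mem' := fun {a b} ha hb g => by rw [smul_add, ha g, hb g]
  mul_mem' := fun {a b} ha hb g => by rw [smul_mul', ha g, hb g]
  neg_mem' := fun {a} ha g => by rw [smul_neg, ha g]

/-- The restriction of an equivariant algebra map to fixed subrings. -/
def fixedMap {G A B : Type*} [Group G] [CommRing A] [CommRing B] [Algebra A B]
    [MulSemiringAction G A] [MulSemiringAction G B]
    (hcompat : ∀ (g : G) (a : A), algebraMap A B (g • a) = g • algebraMap A B a) :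
    fixedSubring G A →+* fixedSubring G B :=
  RingHom.codRestrict ((algebraMap A B).comp (fixedSubring G A).subtype) (fixedSubring G B)
    (fun x g => by
      show g • algebraMap A B x.1 = algebraMap A B x.1
      rw [← hcompat, x.2 g])

open Polynomial TensorProduct IsLocalRing

section HenselianPairs

variable {S : Type*} [CommRing S] {J : Ideal S}

theorem isUnit_of_isUnit_mk (hJ : J ≤ Ideal.jacobson ⊥) {x : S}
    (hx : IsUnit (Ideal.Quotient.mk J x)) : IsUnit x :=
  have := isLocalHom_of_le_jacobson_bot J hJ
  isUnit_of_map_unit _ x hx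

theorem isUnit_of_sub_mem (hJ : J ≤ Ideal.jacobson ⊥) {x y : S} (hy : IsUnit y)
    (h : x - y ∈ J) : IsUnit x :=
  isUnit_of_isUnit_mk hJ (Ideal.Quotient.eq.mpr h ▸ hy.map _)

theorem sub_mem_of_sub_mem_jacobson {e b : S} (he : IsIdempotentElem e) (hb : b * b - b ∈ J)
    (h : e - b ∈ Ideal.jacobson ⊥) : e - b ∈ J := by
  have hu : IsUnit (1 - (e - b) ^ 2) := by
    refine isUnit_of_sub_mem (J := .jacobson ⊥) le_rfl isUnit_one ?_
    rw [sub_sub_cancel_left]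
    exact neg_mem (Ideal.pow_mem_of_mem _ h 2 two_pos)
  have hmul : (e - b) * (1 - (e - b) ^ 2) = (b * b - b) * (1 + b - 3 * e) := by
    linear_combination (3 * b - 1 - e) * he.eq
  exact (J.mul_unit_mem_iff_mem hu).mp (hmul ▸ J.mul_mem_right _ hb)

theorem linearMap_apply_mem_of_mem_map {T : Type*} [CommRing T] [Algebra S T] (l : T →ₗ[S] S)
    {z : T} (hz : z ∈ J.map (algebraMap S T)) : l z ∈ J := by
  have hz' : z ∈ J • (⊤ : Submodule S T) := by rwa [Ideal.smul_top_eq_map]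
  have hl : J • (⊤ : Submodule S T) ≤ Submodule.comap l J :=
    Submodule.smul_le.mpr fun r hr t _ => by simpa using J.mul_mem_right (l t) hr
  exact hl hz'

theorem eval_divByMonic_X_sub_C_self (f : S[X]) (a : S) :
    (f /ₘ (X - C a)).eval a = f.derivative.eval a := by
  have h := congrArg (fun p => p.derivative.eval a) (X_sub_C_mul_divByMonic_eq_sub_modByMonic f a)
  simpa [modByMonic_X_sub_C_eq_C_eval] using h

theorem root_sub_mul_mk_divByMonic (f : S[X]) (a : S) :
    (AdjoinRoot.root f - algebraMap S _ a) * AdjoinRoot.mk f (f /ₘ (X - C a)) =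
      -algebraMap S (AdjoinRoot f) (f.eval a) := by
  have h := congrArg (AdjoinRoot.mk f) (X_sub_C_mul_divByMonic_eq_sub_modByMonic f a)
  simpa [modByMonic_X_sub_C_eq_C_eval, AdjoinRoot.algebraMap_eq] using h

theorem exists_mk_eq_algebraMap_eval_add (f p : S[X]) (a : S) :
    ∃ c, AdjoinRoot.mk f p =
      algebraMap S _ (p.eval a) + (AdjoinRoot.root f - algebraMap S _ a) * c := by
  obtain ⟨c, hc⟩ : X - C a ∣ p - C (p.eval a) := X_sub_C_dvd_sub_C_eval
  refine ⟨AdjoinRoot.mk f c, ?_⟩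
  have h := congrArg (AdjoinRoot.mk f) (sub_eq_iff_eq_add'.mp hc)
  simpa [AdjoinRoot.algebraMap_eq] using h

theorem exists_linearMap_mk_divByMonic_eq_one {f : S[X]} (hf : f.Monic) (hn : f.natDegree ≠ 0)
    (a : S) : ∃ l : AdjoinRoot f →ₗ[S] S, l (AdjoinRoot.mk f (f /ₘ (X - C a))) = 1 := by
  refine ⟨lcoeff S (f.natDegree - 1) ∘ₗ AdjoinRoot.modByMonicHom hf, ?_⟩
  nontriviality S
  have hlt : (f /ₘ (X - C a)).degree < f.degree := degree_divByMonic_lt f _ hf.ne_zero (by simp)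
  have hle : (X - C a).degree ≤ f.degree := by
    rw [degree_X_sub_C, degree_eq_natDegree hf.ne_zero]
    exact_mod_cast Nat.one_le_iff_ne_zero.mpr hn
  rw [LinearMap.comp_apply, AdjoinRoot.modByMonicHom_mk, (modByMonic_eq_self_iff hf).mpr hlt,
    lcoeff_apply, ← natDegree_X_sub_C a, ← natDegree_divByMonic f (monic_X_sub_C a),
    coeff_natDegree, leadingCoeff_divByMonic_of_monic (monic_X_sub_C a) hle, hf.leadingCoeff]

-- Nakayama: modulo `J`, the root acts on the ideal generated by `e` as the scalar `a₀`.
theorem exists_root_mul_eq_algebraMap_mul (hJ : J ≤ Ideal.jacobson ⊥) {f : S[X]} (hf : f.Monic)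
    {a₀ : S} {e : AdjoinRoot f} (he : IsIdempotentElem e)
    (h : (AdjoinRoot.root f - algebraMap S _ a₀) * e ∈ J.map (algebraMap S (AdjoinRoot f))) :
    ∃ a : S, AdjoinRoot.root f * e = algebraMap S _ a * e := by
  have := hf.finite_adjoinRoot
  let N : Submodule S (AdjoinRoot f) := .map (LinearMap.mulRight S e) ⊤
  have hle : N ≤ Submodule.span S {e} ⊔ J • N := by
    rintro _ ⟨z, -, rfl⟩
    obtain ⟨p, rfl⟩ := AdjoinRoot.mk_surjective z
    obtain ⟨c, hc⟩ := exists_mk_eq_algebraMap_eval_add f p a₀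
    have hp : AdjoinRoot.mk f p * e = p.eval a₀ • e +
        (AdjoinRoot.root f - algebraMap S _ a₀) * e * c * e := by
      rw [Algebra.smul_def]
      linear_combination e * hc - (AdjoinRoot.root f - algebraMap S _ a₀) * c * he.eq
    rw [LinearMap.mulRight_apply, hp]
    refine Submodule.add_mem_sup (Submodule.smul_mem _ _ (Submodule.mem_span_singleton_self e)) ?_
    rw [← Submodule.map_smul'', Ideal.smul_top_eq_map]
    exact Submodule.mem_map_of_mem (f := LinearMap.mulRight S e) (Ideal.mul_mem_right _ _ h)
  obtain ⟨a, ha⟩ := Submodule.mem_span_singleton.mp <|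
    Submodule.le_of_le_smul_of_le_jacobson_bot (Module.Finite.fg_top.map _) hJ hle
      ⟨AdjoinRoot.root f, trivial, rfl⟩
  exact ⟨a, by simpa [Algebra.smul_def] using ha.symm⟩

theorem exists_isRoot_of_isIdempotentElem (hJ : J ≤ Ideal.jacobson ⊥) {f : S[X]} (hf : f.Monic)
    {a₀ : S} {e : AdjoinRoot f} (he : IsIdempotentElem e)
    (h : (AdjoinRoot.root f - algebraMap S _ a₀) * e ∈ J.map (algebraMap S (AdjoinRoot f)))
    (l : AdjoinRoot f →ₗ[S] S) (hl : IsUnit (l e)) : ∃ a, f.IsRoot a ∧ a - a₀ ∈ J := by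
  obtain ⟨a, ha⟩ := exists_root_mul_eq_algebraMap_mul hJ hf he h
  have hscalar (r : S) : l (algebraMap S _ r * e) = r * l e := by
    rw [← Algebra.smul_def, map_smul, smul_eq_mul]
  refine ⟨a, ?_, ?_⟩
  · obtain ⟨c, hc⟩ := exists_mk_eq_algebraMap_eval_add f f a
    have hfe : algebraMap S (AdjoinRoot f) (f.eval a) * e = 0 := by
      rw [AdjoinRoot.mk_self] at hc
      linear_combination -e * hc - c * ha
    exact hl.mul_left_eq_zero.mp (by rw [← hscalar, hfe, map_zero])
  · refine (J.mul_unit_mem_iff_mem hl).mp ?_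
    rw [← hscalar, map_sub, sub_mul, ← ha, ← sub_mul]
    exact linearMap_apply_mem_of_mem_map l h

/- If `a₀` is a simple root of `f` modulo `J`, then modulo `J` the element
`(f / (X - a₀)) / f'(a₀)` is the idempotent cutting the component `X = a₀` out of `S[X] / (f)`;
it lifts to an idempotent `e`, and the root is the scalar by which `X` acts on `e`. -/
theorem henselianRing_of_exists_isIdempotentElem (hJ : J ≤ Ideal.jacobson ⊥)
    (hlift : ∀ f : S[X], f.Monic → ∀ b : AdjoinRoot f,
      b * b - b ∈ J.map (algebraMap S (AdjoinRoot f)) →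
        ∃ e, IsIdempotentElem e ∧ e - b ∈ J.map (algebraMap S (AdjoinRoot f))) :
    HenselianRing S J where
  jac := hJ
  is_henselian f hf a₀ h₀ h₁ := by
    nontriviality S
    obtain ⟨u, hu⟩ := isUnit_of_isUnit_mk hJ h₁
    have hn : f.natDegree ≠ 0 := fun h => by simp [hf.natDegree_eq_zero.mp h] at hu
    set κ := algebraMap S (AdjoinRoot f)
    set x := AdjoinRoot.root f
    set y := AdjoinRoot.mk f (f /ₘ (X - C a₀))
    have hxy : (x - κ a₀) * y = -κ (f.eval a₀) := root_sub_mul_mk_divByMonic f a₀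
    have hκ : κ (f.eval a₀) ∈ J.map κ := Ideal.mem_map_of_mem κ h₀
    have huu : κ ↑u⁻¹ * κ u = 1 := by rw [← map_mul, u.inv_mul, map_one]
    obtain ⟨c, hc⟩ : ∃ c, y = κ u + (x - κ a₀) * c := by
      rw [hu, ← eval_divByMonic_X_sub_C_self]
      exact exists_mk_eq_algebraMap_eval_add f _ a₀
    obtain ⟨e, he, heb⟩ := hlift f hf (κ ↑u⁻¹ * y) <| by
      have : κ ↑u⁻¹ * y * (κ ↑u⁻¹ * y) - κ ↑u⁻¹ * y = κ (f.eval a₀) * -(κ ↑u⁻¹ ^ 2 * c) := by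
        linear_combination κ ↑u⁻¹ ^ 2 * c * hxy + κ ↑u⁻¹ ^ 2 * y * hc + κ ↑u⁻¹ * y * huu
      exact this ▸ Ideal.mul_mem_right _ _ hκ
    have hxe : (x - κ a₀) * e ∈ J.map κ := by
      have : (x - κ a₀) * e = (x - κ a₀) * (e - κ ↑u⁻¹ * y) - κ (f.eval a₀) * κ ↑u⁻¹ := by
        linear_combination κ ↑u⁻¹ * hxy
      exact this ▸ sub_mem (Ideal.mul_mem_left _ _ heb) (Ideal.mul_mem_right _ _ hκ)
    obtain ⟨l, hl⟩ := exists_linearMap_mk_divByMonic_eq_one hf hn a₀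
    have hly : l (κ ↑u⁻¹ * y) = ↑u⁻¹ := by
      rw [← Algebra.smul_def, map_smul, hl, smul_eq_mul, mul_one]
    refine exists_isRoot_of_isIdempotentElem hJ hf he hxe l (isUnit_of_sub_mem hJ u⁻¹.isUnit ?_)
    rw [← hly, ← map_sub]
    exact linearMap_apply_mem_of_mem_map l heb

theorem henselianRing_map_ringEquiv {T : Type*} [CommRing T] [hS : HenselianRing S J]
    (e : S ≃+* T) :
    HenselianRing T (J.map (e : S →+* T)) := by
  have hjac : J.map (e : S →+* T) ≤ Ideal.jacobson ⊥ := by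
    refine (Ideal.map_mono hS.jac).trans_eq ?_
    rw [Ideal.map_jacobson_of_bijective (f := (e : S →+* T)) e.bijective, Ideal.map_bot]
  have hmem (x : T) : x ∈ J.map (e : S →+* T) ↔ e.symm x ∈ J := by
    rw [← Ideal.mem_comap]
    exact Ideal.ext_iff.mp (Ideal.map_comap_of_equiv e) x
  have heval (p : T[X]) (a : T) :
      (p.map (e.symm : T →+* S)).eval (e.symm a) = e.symm (p.eval a) :=
    eval_map_apply (e.symm : T →+* S) a
  refine ⟨hjac, fun f hf a₀ h₀ h₁ => ?_⟩
  have h₁ := isUnit_of_isUnit_mk hjac h₁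
  obtain ⟨a, ha, haa₀⟩ := hS.is_henselian (f.map (e.symm : T →+* S)) (hf.map _) (e.symm a₀)
    (by rw [heval]; exact (hmem _).mp h₀)
    (by rw [derivative_map, heval]; exact (h₁.map e.symm).map _)
  refine ⟨e a, e.symm.injective ?_, (hmem _).mpr ?_⟩
  · rw [← heval, e.symm_apply_apply, ha.eq_zero, map_zero]
  · rwa [map_sub, e.symm_apply_apply]

end HenselianPairs

section IntegralExtensions

variable {R A : Type*} [CommRing R] [CommRing A] [Algebra R A] [Algebra.IsIntegral R A]

theorem map_jacobson_bot_le :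
    (Ideal.jacobson ⊥ : Ideal R).map (algebraMap R A) ≤ Ideal.jacobson ⊥ := by
  refine le_sInf fun M ⟨_, hM⟩ => Ideal.map_le_iff_le_comap.mpr (sInf_le ⟨bot_le, ?_⟩)
  exact Ideal.isMaximal_comap_of_isIntegral_of_isMaximal M

theorem map_maximalIdeal_le_jacobson_bot [IsLocalRing R] :
    (maximalIdeal R).map (algebraMap R A) ≤ Ideal.jacobson ⊥ :=
  (Ideal.map_mono (maximalIdeal_le_jacobson ⊥)).trans map_jacobson_bot_le

theorem jacobson_bot_le_radical_map_maximalIdeal [IsLocalRing R] :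
    (Ideal.jacobson ⊥ : Ideal A) ≤ ((maximalIdeal R).map (algebraMap R A)).radical := by
  rw [Ideal.radical_eq_sInf]
  refine le_sInf fun P ⟨hP, _⟩ => sInf_le ⟨bot_le, ?_⟩
  have hcomap : P.comap (algebraMap R A) = maximalIdeal R :=
    ((maximalIdeal.isMaximal R).eq_of_le (Ideal.comap_ne_top _ ‹P.IsPrime›.ne_top)
      (Ideal.map_le_iff_le_comap.mp hP)).symm
  exact Ideal.isMaximal_of_isIntegral_of_isMaximal_comap P
    (hcomap ▸ maximalIdeal.isMaximal R)

theorem comap_jacobson_bot [IsLocalRing R] [Nontrivial A] :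
    (Ideal.jacobson ⊥ : Ideal A).comap (algebraMap R A) = maximalIdeal R :=
  ((maximalIdeal.isMaximal R).eq_of_le
    (Ideal.comap_ne_top _ fun h => bot_ne_top (Ideal.jacobson_eq_top_iff.mp h))
    (Ideal.map_le_iff_le_comap.mp map_maximalIdeal_le_jacobson_bot)).symm

end IntegralExtensions

section EtaleLifting

theorem algHom_ext_of_formallyUnramified {R S C : Type*} [CommRing R] [CommRing S] [CommRing C]
    [Algebra R S] [Algebra R C] [Algebra.EssFiniteType R S] [Algebra.FormallyUnramified R S]
    {J : Ideal C} (hJ : J ≤ Ideal.jacobson ⊥) {φ ψ : S →ₐ[R] C} (h : ∀ s, φ s - ψ s ∈ J) :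
    φ = ψ := by
  obtain ⟨t, ht, ht1⟩ := Algebra.FormallyUnramified.iff_exists_tensorProduct.mp
    (inferInstance : Algebra.FormallyUnramified R S)
  let Φ : S ⊗[R] S →ₐ[R] C := Algebra.TensorProduct.lift φ ψ fun _ _ => .all _ _
  have hΦ (z : S ⊗[R] S) : Φ z - ψ (Algebra.TensorProduct.lmul' R z) ∈ J := by
    induction z with
    | zero => simp
    | tmul x y =>
      rw [Algebra.TensorProduct.lift_tmul, Algebra.TensorProduct.lmul'_apply_tmul, map_mul,
        ← sub_mul]
      exact J.mul_mem_right _ (h x)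
    | add x y hx hy =>
      rw [map_add, map_add, map_add, add_sub_add_comm]
      exact J.add_mem hx hy
  have hunit : IsUnit (Φ t) := by
    refine isUnit_of_sub_mem hJ isUnit_one ?_
    have ht1' : Algebra.TensorProduct.lmul' R t = (1 : S) := by simpa using! ht1
    simpa [ht1'] using hΦ t
  ext s
  have hs : (ψ s - φ s) * Φ t = 0 := by simpa [Φ] using congrArg Φ (ht s)
  exact (sub_eq_zero.mp (hunit.mul_left_eq_zero.mp hs)).symm

theorem exists_algHom_standardEtalePair_ring {R E k : Type*} [CommRing R] [CommRing E] [Field k]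
    [Algebra R E] [Algebra R k] [Algebra.Etale R E] (pt : E →ₐ[R] k) :
    ∃ (P : StandardEtalePair R) (φ : E →ₐ[R] P.Ring) (ψ : P.Ring →ₐ[R] k), ψ.comp φ = pt := by
  have : (RingHom.ker pt).IsPrime := RingHom.ker_isPrime _
  obtain ⟨f, hf, ⟨⟨P⟩⟩⟩ := Algebra.IsEtaleAt.exists_isStandardEtale (R := R) (RingHom.ker pt)
  let ψ : Localization.Away f →ₐ[R] k :=
    IsLocalization.Away.liftAlgHom f (isUnit_iff_ne_zero.mpr hf : IsUnit (pt f))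
  refine ⟨P.P, (P.equivRing : _ →ₐ[R] _).comp (IsScalarTower.toAlgHom R E (Localization.Away f)),
    ψ.comp (P.equivRing.symm : _ →ₐ[R] _), ?_⟩
  ext x
  simp [ψ]

theorem exists_mkₐ_comp_eq {R C : Type*} [CommRing R] [CommRing C] [Algebra R C] {J : Ideal C}
    [hJ : HenselianRing C J] {P : StandardEtalePair R} (ψ : P.Ring →ₐ[R] C ⧸ J) :
    ∃ φ : P.Ring →ₐ[R] C, (Ideal.Quotient.mkₐ R J).comp φ = ψ := by
  obtain ⟨a, ha⟩ := Ideal.Quotient.mkₐ_surjective R J (ψ P.X)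
  have hψ := P.hasMap_X.map ψ
  rw [← ha] at hψ
  have heval (p : R[X]) : aeval (Ideal.Quotient.mkₐ R J a) p =
      Ideal.Quotient.mk J ((p.map (algebraMap R C)).eval a) := by
    rw [aeval_algHom_apply, eval_map_algebraMap, Ideal.Quotient.mkₐ_eq_mk]
  obtain ⟨b, hb, hba⟩ := hJ.is_henselian (P.f.map (algebraMap R C)) (P.monic_f.map _) a
    (by rw [← Ideal.Quotient.eq_zero_iff_mem, ← heval, hψ.1])
    (by rw [derivative_map, ← heval]; exact hψ.isUnit_derivative_f)
  have hab : Ideal.Quotient.mkₐ R J b = Ideal.Quotient.mkₐ R J a := Ideal.Quotient.eq.mpr hba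
  have hmap : P.HasMap b := by
    refine ⟨by simpa [eval_map_algebraMap] using hb.eq_zero, isUnit_of_isUnit_mk hJ.jac ?_⟩
    rw [← Ideal.Quotient.mkₐ_eq_mk R, ← aeval_algHom_apply, hab]
    exact hψ.2
  exact ⟨P.lift b hmap, P.hom_ext (by rw [AlgHom.comp_apply, P.lift_X, hab, ha])⟩

theorem exists_toAlgHom_residueField_comp_eq {R E H : Type*} [CommRing R] [CommRing E]
    [CommRing H] [HenselianLocalRing H] [Algebra R E] [Algebra.Etale R E] [Algebra R H]
    (pt : E →ₐ[R] ResidueField H) :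
    ∃ φ : E →ₐ[R] H, (IsScalarTower.toAlgHom R H (ResidueField H)).comp φ = pt := by
  obtain ⟨P, φ, ψ, rfl⟩ := exists_algHom_standardEtalePair_ring pt
  obtain ⟨σ, hσ⟩ := exists_mkₐ_comp_eq (J := maximalIdeal H) (P := P) ψ
  exact ⟨σ.comp φ, by rw [← AlgHom.comp_assoc]; exact congrArg (·.comp φ) hσ⟩

theorem exists_away_algHom_range {S L : Type*} [CommRing S] [CommRing L] [Algebra S L]
    (M : Submonoid S) [IsLocalization M L] {ι : Type*} [Finite ι] (y : ι → L) :
    ∃ b ∈ M, ∃ ψ : Localization.Away b →ₐ[S] L, ∀ t, y t ∈ ψ.range := by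
  obtain ⟨b, hb⟩ := IsLocalization.exist_integer_multiples_of_finite M y
  have hu : IsUnit (algebraMap S L b) := IsLocalization.map_units L b
  let ψ : Localization.Away (b : S) →ₐ[S] L :=
    IsLocalization.Away.liftAlgHom (f := Algebra.ofId S L) (b : S) hu
  refine ⟨b, b.2, ψ, fun t => ?_⟩
  obtain ⟨c, hc⟩ := hb t
  have hb' : (b : S) • (IsLocalization.Away.invSelf (b : S) : Localization.Away (b : S)) = 1 := by
    rw [Algebra.smul_def, IsLocalization.Away.mul_invSelf]
  refine ⟨c • IsLocalization.Away.invSelf (b : S), hu.mul_left_cancel ?_⟩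
  rw [← Algebra.smul_def, ← Algebra.smul_def, ← hc]
  refine (map_smul ψ (b : S) _).symm.trans ?_
  rw [smul_comm, hb', map_smul, map_one, Algebra.smul_def, mul_one]

theorem exists_etale_root {R k : Type*} {D : Type u} [CommRing R] [CommRing D] [CommRing k]
    [Algebra R D] [Algebra.Etale R D] [Algebra R k] (pt : D →ₐ[R] k) {q : D[X]} (hq : q.Monic)
    {a : k} (ha : q.eval₂ (pt : D →+* k) a = 0)
    (ha' : IsUnit (q.derivative.eval₂ (pt : D →+* k) a)) :
    ∃ (E : Type u) (_ : CommRing E) (_ : Algebra R E) (_ : Algebra.Etale R E) (φ : D →ₐ[R] E)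
      (x : E) (pt' : E →ₐ[R] k),
      q.eval₂ (φ : D →+* E) x = 0 ∧ pt'.comp φ = pt ∧ pt' x = a := by
  let P : StandardEtalePair D := ⟨q, hq, q.derivative, 1, 0, 1, by ring⟩
  let : Algebra R P.Ring := ((algebraMap D P.Ring).comp (algebraMap R D)).toAlgebra
  have : IsScalarTower R D P.Ring := .of_algebraMap_eq' rfl
  let : Algebra D k := (pt : D →+* k).toAlgebra
  have : IsScalarTower R D k := .of_algebraMap_eq' pt.comp_algebraMap.symm
  have hP : P.HasMap a := ⟨ha, ha'⟩
  exact ⟨P.Ring, inferInstance, inferInstance, .comp R D _, IsScalarTower.toAlgHom R D P.Ring, P.X,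
    (P.lift a hP).restrictScalars R, P.hasMap_X.1, AlgHom.ext (P.lift a hP).commutes, P.lift_X a hP⟩

end EtaleLifting

section IntegralOverHenselian

theorem exists_eq_mul_of_map_residue_eq_mul {H : Type*} [CommRing H] [HenselianLocalRing H]
    {p : H[X]} (hp : p.Monic) {f g : (ResidueField H)[X]} (hf : f.Monic) (hg : g.Monic)
    (h : p.map (residue H) = f * g) (hfg : IsCoprime f g) :
    ∃ F G : H[X], p = F * G ∧ F.map (residue H) = f ∧ G.map (residue H) = g ∧ IsCoprime F G := by
  have hn : p.natDegree = f.natDegree + g.natDegree := by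
    rw [← hf.natDegree_mul hg, ← h, hp.natDegree_map]
  let p' : MonicDegreeEq H p.natDegree := .mk p hp rfl
  let e (S : Type _) [CommRing S] [Algebra H S] :=
    UniversalCoprimeFactorizationRing.homEquiv S f.natDegree g.natDegree hn p'
  let pt := (e (ResidueField H)).symm ⟨(.mk f hf rfl, .mk g hg rfl), h.symm, hfg⟩
  obtain ⟨φ, hφ⟩ := exists_toAlgHom_residueField_comp_eq pt
  have hpt : e (ResidueField H) pt = ⟨(.mk f hf rfl, .mk g hg rfl), h.symm, hfg⟩ :=
    Equiv.apply_symm_apply _ _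
  have hfst := UniversalCoprimeFactorizationRing.homEquiv_comp_fst H _ _ hn p' φ
    (IsScalarTower.toAlgHom H H (ResidueField H))
  have hsnd := UniversalCoprimeFactorizationRing.homEquiv_comp_snd H _ _ hn p' φ
    (IsScalarTower.toAlgHom H H (ResidueField H))
  rw [hφ] at hfst hsnd
  refine ⟨(e H φ).1.1.1, (e H φ).1.2.1, ?_, ?_, ?_, (e H φ).2.2⟩
  · simpa [p'] using! (e H φ).2.1.symm
  · exact congrArg Subtype.val (hfst.symm.trans (congrArg (·.1.1) hpt))
  · exact congrArg Subtype.val (hsnd.symm.trans (congrArg (·.1.2) hpt))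

theorem exists_eq_X_pow_mul_of_isRoot {k : Type*} [Field k] {p : k[X]} (hp : p.Monic)
    (h₀ : p.IsRoot 0) (h₁ : p.IsRoot 1) :
    ∃ (r : ℕ) (q : k[X]), r ≠ 0 ∧ q.Monic ∧ q.IsRoot 1 ∧ IsCoprime (X ^ r) q ∧ p = X ^ r * q := by
  obtain ⟨q, hq, hqn⟩ := exists_eq_pow_rootMultiplicity_mul_and_not_dvd p hp.ne_zero 0
  rw [C_0, sub_zero] at hq hqn
  refine ⟨_, q, ((rootMultiplicity_pos hp.ne_zero).mpr h₀).ne', ?_, ?_,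
    (irreducible_X.coprime_iff_not_dvd.mpr hqn).pow_left, hq⟩
  · exact (monic_X_pow _).of_mul_monic_left (hq ▸ hp)
  · rw [hq] at h₁
    simpa using h₁

variable {H T : Type*} [CommRing H] [CommRing T] [Algebra H T]

theorem aeval_sub_aeval_mem [IsLocalRing H] {N : Ideal T}
    (hN : (maximalIdeal H).map (algebraMap H T) ≤ N) {p q : H[X]}
    (h : p.map (residue H) = q.map (residue H)) (b : T) : aeval b p - aeval b q ∈ N := by
  rw [← map_sub, aeval_eq_sum_range]
  refine sum_mem fun i _ => ?_
  rw [Algebra.smul_def]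
  refine N.mul_mem_right _ (hN (Ideal.mem_map_of_mem _ ?_))
  rw [← residue_eq_zero_iff, coeff_sub, map_sub, sub_eq_zero]
  simpa using congrArg (coeff · i) h

variable [HenselianLocalRing H]

/- A monic `p` with `p(b) = 0` and `p(0) = p(1) = 0` factors modulo the maximal ideal as `X ^ r * q`
with coprime factors and `q(1) = 0`.  Lifting this to `p = F * G` with `u * F + v * G = 1`, the
element `(u * F)(b)` is idempotent, and modulo `N` it is the image of `b`. -/
theorem exists_isIdempotentElem_sub_mem [Algebra.IsIntegral H T] {N : Ideal T}
    (hN : (maximalIdeal H).map (algebraMap H T) ≤ N) {b : T} (hb : b * b - b ∈ N) :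
    ∃ e : T, IsIdempotentElem e ∧ e - b ∈ N := by
  obtain ⟨p₀, hp₀, hp₀b⟩ := Algebra.IsIntegral.isIntegral (R := H) b
  rw [← aeval_def] at hp₀b
  let p : H[X] := (X - C 1) * (X * p₀)
  have hp : p.Monic := (monic_X_sub_C 1).mul (monic_X.mul hp₀)
  have hpb : aeval b p = 0 := by simp [p, hp₀b]
  obtain ⟨r, q, hr, hq, hq₁, hrq, hpq⟩ :=
    exists_eq_X_pow_mul_of_isRoot (hp.map (residue H)) (by simp [p]) (by simp [p])
  obtain ⟨F, G, hFG, hF, hG, u, v, huv⟩ :=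
    exists_eq_mul_of_map_residue_eq_mul hp (monic_X_pow r) hq hpq hrq
  have hsum : aeval b u * aeval b F + aeval b v * aeval b G = 1 := by
    simpa using congrArg (aeval b) huv
  have hprod : aeval b F * aeval b G = 0 := by rw [← map_mul, ← hFG, hpb]
  have hFb : aeval b F - b ∈ N := by
    have hFX : aeval b F - aeval b (X ^ r) ∈ N := aeval_sub_aeval_mem hN (by simpa using hF) b
    have hpow : b ^ r - b ∈ N := by
      rw [← Ideal.Quotient.eq, map_pow]
      exact IsIdempotentElem.pow_eq (by rw [IsIdempotentElem, ← map_mul, Ideal.Quotient.eq.mpr hb])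
        hr
    simpa using add_mem hFX hpow
  have hGb : b * aeval b G ∈ N := by
    obtain ⟨q', rfl⟩ := dvd_iff_isRoot.mpr hq₁
    obtain ⟨Q, rfl⟩ := map_surjective (residue H) residue_surjective q'
    have hGX : aeval b G - aeval b ((X - C 1) * Q) ∈ N :=
      aeval_sub_aeval_mem hN (by simpa using hG) b
    have hbG : b * aeval b G =
        b * (aeval b G - aeval b ((X - C 1) * Q)) + (b * b - b) * aeval b Q := by
      simp only [map_mul, map_sub, aeval_X, map_one]
      ring
    exact hbG ▸ add_mem (N.mul_mem_left _ hGX) (N.mul_mem_right _ hb)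
  refine ⟨aeval b u * aeval b F, ?_, ?_⟩
  · rw [IsIdempotentElem]
    linear_combination aeval b u * aeval b F * hsum - aeval b u * aeval b v * hprod
  · have heb : aeval b u * aeval b F - b = (aeval b F - b) * (aeval b u * (1 - b)) -
        (b * b - b) * aeval b u - b * aeval b G * aeval b v := by
      linear_combination b * hsum
    exact heb ▸ sub_mem (sub_mem (N.mul_mem_right _ hFb) (N.mul_mem_right _ hb))
      (N.mul_mem_right _ hGb)

theorem henselianRing_of_isIntegral [Algebra.IsIntegral H T] {J : Ideal T}
    (hJ : J ≤ Ideal.jacobson ⊥) : HenselianRing T J := by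
  refine henselianRing_of_exists_isIdempotentElem hJ fun f hf b hb => ?_
  have := hf.finite_adjoinRoot
  have : Algebra.IsIntegral H (AdjoinRoot f) := Algebra.IsIntegral.trans T
  obtain ⟨e, he, heb⟩ := exists_isIdempotentElem_sub_mem (H := H) map_maximalIdeal_le_jacobson_bot
    ((Ideal.map_mono hJ).trans map_jacobson_bot_le hb)
  exact ⟨e, he, sub_mem_of_sub_mem_jacobson he hb heb⟩

end IntegralOverHenselian

section ResiduallyTrivial

variable {R S C : Type*} [CommRing R] [IsLocalRing R] [CommRing S] [Algebra R S] [CommRing C]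
  [Algebra R C]

theorem surjective_of_algHom_residueField (pt : S →ₐ[R] ResidueField R) :
    Function.Surjective pt := fun y =>
  let ⟨r, hr⟩ := residue_surjective y
  ⟨algebraMap R S r, (pt.commutes r).trans hr⟩

instance : IsLocalHom (algebraMap R (ResidueField R)) :=
  inferInstanceAs (IsLocalHom (residue R))

variable [IsLocalRing S]

theorem mem_maximalIdeal_iff_of_algHom_residueField (pt : S →ₐ[R] ResidueField R) {x : S} :
    x ∈ maximalIdeal S ↔ pt x = 0 := by
  rw [← ker_eq_maximalIdeal (pt : S →+* ResidueField R) (surjective_of_algHom_residueField pt)]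
  rfl

theorem map_maximalIdeal_eq_of_formallyUnramified [Algebra.EssFiniteType R S]
    [Algebra.FormallyUnramified R S] (pt : S →ₐ[R] ResidueField R) :
    (maximalIdeal R).map (algebraMap R S) = maximalIdeal S := by
  have : IsLocalHom ((pt : S →+* ResidueField R).comp (algebraMap R S)) := by
    rw [AlgHom.comp_algebraMap]
    infer_instance
  have := isLocalHom_of_comp (algebraMap R S) (pt : S →+* ResidueField R)
  exact Algebra.FormallyUnramified.map_maximalIdeal

theorem subsingleton_algHom_of_formallyUnramified [Algebra.EssFiniteType R S]
    [Algebra.FormallyUnramified R S] (pt : S →ₐ[R] ResidueField R)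
    (hC : (maximalIdeal R).map (algebraMap R C) ≤ Ideal.jacobson ⊥) :
    Subsingleton (S →ₐ[R] C) where
  allEq φ ψ := algHom_ext_of_formallyUnramified hC fun s => by
    obtain ⟨r, hr⟩ := residue_surjective (pt s)
    have hs : s - algebraMap R S r ∈ (maximalIdeal R).map (algebraMap R S) := by
      rw [map_maximalIdeal_eq_of_formallyUnramified pt,
        mem_maximalIdeal_iff_of_algHom_residueField pt, map_sub, pt.commutes, sub_eq_zero]
      exact hr.symm
    have hmem (χ : S →ₐ[R] C) :
        χ s - algebraMap R C r ∈ (maximalIdeal R).map (algebraMap R C) := by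
      have h := Ideal.mem_map_of_mem (χ : S →+* C) hs
      rw [Ideal.map_map, AlgHom.comp_algebraMap] at h
      simpa using h
    simpa using sub_mem (hmem φ) (hmem ψ)

end ResiduallyTrivial

theorem flat_of_forall_exists_flat {R M : Type*} [CommRing R] [AddCommGroup M] [Module R M]
    (h : ∀ {l : ℕ} (f : Fin l → R) (x : Fin l → M), ∑ t, f t • x t = 0 →
      ∃ (L : Type u) (_ : AddCommGroup L) (_ : Module R L) (_ : Module.Flat R L)
        (φ : L →ₗ[R] M) (y : Fin l → L),
        (∀ t, φ (y t) = x t) ∧ ∑ t, f t • y t = 0) :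
    Module.Flat R M := by
  refine Module.Flat.of_forall_isTrivialRelation fun {l f x} hx => ?_
  obtain ⟨L, _, _, _, φ, y, hyx, hy⟩ := h f x hx
  obtain ⟨k, a, z, hz, ha⟩ := Module.Flat.isTrivialRelation_of_sum_smul_eq_zero hy
  exact ⟨k, a, φ ∘ z, fun t => by simp [← hyx, hz], ha⟩

/-- A residually trivial étale neighbourhood of the closed point of `Spec R`, for a local ring `R`:
an étale `R`-algebra with a point above the closed point whose residue field is that of `R`. Only
standard étale algebras are allowed, so that the neighbourhoods form a type in the universe of
`R`. -/
structure EtaleNbhd (R : Type*) [CommRing R] [IsLocalRing R] where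
  pair : StandardEtalePair R
  point : pair.Ring →ₐ[R] ResidueField R

namespace EtaleNbhd

variable {R : Type*} [CommRing R] [IsLocalRing R]

instance (i : EtaleNbhd R) : (RingHom.ker i.point).IsPrime := RingHom.ker_isPrime _

/-- The local ring of an étale neighbourhood at its point. -/
abbrev Stalk (i : EtaleNbhd R) : Type _ := Localization.AtPrime (RingHom.ker i.point)

instance (i : EtaleNbhd R) : Algebra.EssFiniteType R i.Stalk :=
  have : Algebra.EssFiniteType i.pair.Ring i.Stalk :=
    .of_isLocalization _ (RingHom.ker i.point).primeCompl
  .comp R i.pair.Ring i.Stalk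

instance (i : EtaleNbhd R) : Algebra.FormallyUnramified R i.Stalk :=
  have : Algebra.FormallyUnramified i.pair.Ring i.Stalk :=
    .of_isLocalization (RingHom.ker i.point).primeCompl
  .comp R i.pair.Ring i.Stalk

instance (i : EtaleNbhd R) : Module.Flat R i.Stalk :=
  have : Module.Flat i.pair.Ring i.Stalk := IsLocalization.flat _ (RingHom.ker i.point).primeCompl
  .trans R i.pair.Ring i.Stalk

/-- The factorization through the stalk of a map that inverts every function not vanishing at the
point. -/
noncomputable def extend (i : EtaleNbhd R) {C : Type*} [CommRing C] [Algebra R C]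
    (φ : i.pair.Ring →ₐ[R] C) (hφ : ∀ x, i.point x ≠ 0 → IsUnit (φ x)) : i.Stalk →ₐ[R] C :=
  IsLocalization.liftAlgHom (M := (RingHom.ker i.point).primeCompl) (f := φ)
    fun y => hφ y.1 y.2

/-- The point of an étale neighbourhood, as a point of its stalk. -/
noncomputable def stalkPoint (i : EtaleNbhd R) : i.Stalk →ₐ[R] ResidueField R :=
  i.extend i.point fun _ hx => hx.isUnit

theorem stalkPoint_algebraMap (i : EtaleNbhd R) (x : i.pair.Ring) :
    i.stalkPoint (algebraMap i.pair.Ring i.Stalk x) = i.point x := by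
  simp [stalkPoint, extend]

theorem isUnit_of_stalkPoint_ne_zero {i : EtaleNbhd R} {x : i.Stalk} (hx : i.stalkPoint x ≠ 0) :
    IsUnit x := by
  rwa [← notMem_maximalIdeal, mem_maximalIdeal_iff_of_algHom_residueField i.stalkPoint]

theorem subsingleton_stalk_algHom (i : EtaleNbhd R) {C : Type*} [CommRing C] [Algebra R C]
    (hC : (maximalIdeal R).map (algebraMap R C) ≤ Ideal.jacobson ⊥) :
    Subsingleton (i.Stalk →ₐ[R] C) :=
  subsingleton_algHom_of_formallyUnramified i.stalkPoint hC

instance (i j : EtaleNbhd R) : Subsingleton (i.Stalk →ₐ[R] j.Stalk) :=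
  i.subsingleton_stalk_algHom <|
    (map_maximalIdeal_eq_of_formallyUnramified j.stalkPoint).trans_le (maximalIdeal_le_jacobson _)

theorem exists_stalkPoint_comp_eq {E : Type*} [CommRing E] [Algebra R E] [Algebra.Etale R E]
    (pt : E →ₐ[R] ResidueField R) :
    ∃ (i : EtaleNbhd R) (φ : E →ₐ[R] i.Stalk), i.stalkPoint.comp φ = pt := by
  obtain ⟨P, φ, pt', rfl⟩ := exists_algHom_standardEtalePair_ring pt
  let i : EtaleNbhd R := ⟨P, pt'⟩
  exact ⟨i, (IsScalarTower.toAlgHom R P.Ring i.Stalk).comp φ,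
    AlgHom.ext fun x => i.stalkPoint_algebraMap (φ x)⟩

instance : Nonempty (EtaleNbhd R) :=
  ⟨(exists_stalkPoint_comp_eq (Algebra.ofId R (ResidueField R))).choose⟩

instance : Preorder (EtaleNbhd R) where
  le i j := Nonempty (i.Stalk →ₐ[R] j.Stalk)
  le_refl i := ⟨.id _ _⟩
  le_trans _ _ _ h₁ h₂ := ⟨h₂.some.comp h₁.some⟩

theorem le_of_stalkPoint_comp_eq {i j : EtaleNbhd R} {φ : i.pair.Ring →ₐ[R] j.Stalk}
    (h : j.stalkPoint.comp φ = i.point) : i ≤ j :=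
  ⟨i.extend φ fun _ hx => isUnit_of_stalkPoint_ne_zero (by rwa [← h] at hx)⟩

instance : IsDirectedOrder (EtaleNbhd R) where
  directed i j := by
    have : Algebra.Etale R (i.pair.Ring ⊗[R] j.pair.Ring) := .comp R i.pair.Ring _
    obtain ⟨k, φ, hφ⟩ := exists_stalkPoint_comp_eq
      (Algebra.TensorProduct.lift i.point j.point fun _ _ => .all _ _)
    refine ⟨k, le_of_stalkPoint_comp_eq (φ := φ.comp Algebra.TensorProduct.includeLeft) ?_,
      le_of_stalkPoint_comp_eq (φ := φ.comp Algebra.TensorProduct.includeRight) ?_⟩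
    · rw [← AlgHom.comp_assoc, hφ, Algebra.TensorProduct.lift_comp_includeLeft]
    · rw [← AlgHom.comp_assoc, hφ]
      exact Algebra.TensorProduct.lift_comp_includeRight _ _ fun _ _ => .all _ _

/-- The transition maps of the system of étale neighbourhoods. -/
noncomputable def transition (i j : EtaleNbhd R) (h : i ≤ j) : i.Stalk →ₐ[R] j.Stalk :=
  Nonempty.some h

instance : DirectedSystem (fun i : EtaleNbhd R => i.Stalk) (transition · · ·) where
  map_self _ _ := DFunLike.congr_fun (Subsingleton.elim _ (AlgHom.id R _)) _
  map_map _ _ _ hij hjk _ := DFunLike.congr_fun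
    (Subsingleton.elim ((transition _ _ hjk).comp (transition _ _ hij)) _) _

end EtaleNbhd

/-- The henselization of a local ring: the colimit of the local rings of its residually trivial
étale neighbourhoods. -/
def Henselization (R : Type*) [CommRing R] [IsLocalRing R] : Type _ :=
  DirectLimit (fun i : EtaleNbhd R => i.Stalk) EtaleNbhd.transition

namespace Henselization

variable {R : Type*} [CommRing R] [IsLocalRing R]

noncomputable instance : CommRing (Henselization R) :=
  inferInstanceAs (CommRing (DirectLimit _ EtaleNbhd.transition))

noncomputable instance : Algebra R (Henselization R) :=
  inferInstanceAs (Algebra R (DirectLimit _ EtaleNbhd.transition))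

/-- The canonical map from the stalk of an étale neighbourhood to the henselization. -/
noncomputable def of (i : EtaleNbhd R) : i.Stalk →ₐ[R] Henselization R :=
  DirectLimit.Algebra.of _ _ i

theorem of_transition {i j : EtaleNbhd R} (h : i ≤ j) (x : i.Stalk) :
    of j (i.transition j h x) = of i x :=
  DirectLimit.Algebra.of_f h x

theorem exists_of_apply_eq {ι : Type*} [Finite ι] (x : ι → Henselization R) :
    ∃ (i : EtaleNbhd R) (y : ι → i.Stalk), ∀ t, of i (y t) = x t := by
  choose i y hy using fun t => DirectLimit.exists_eq_mk _ (x t)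
  obtain ⟨k, hk⟩ := Finite.exists_le i
  exact ⟨k, fun t => (i t).transition k (hk t) (y t), fun t =>
    (of_transition (hk t) (y t)).trans (hy t).symm⟩

theorem exists_transition_apply_eq_zero {i : EtaleNbhd R} {x : i.Stalk} (hx : of i x = 0) :
    ∃ (j : EtaleNbhd R) (h : i ≤ j), i.transition j h x = 0 := by
  obtain ⟨j, hij, hij', h⟩ := Quotient.exact (hx.trans (map_zero (of i)).symm)
  exact ⟨j, hij, h.trans (map_zero _)⟩

/-- The identification of the residue field of the henselization with that of `R`. -/
noncomputable def point : Henselization R →ₐ[R] ResidueField R :=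
  DirectLimit.Algebra.lift _ _ _ EtaleNbhd.stalkPoint fun i j h x =>
    have := i.subsingleton_stalk_algHom (C := ResidueField R) <|
      (map_maximalIdeal_le _).trans (maximalIdeal_le_jacobson _)
    DFunLike.congr_fun (Subsingleton.elim (j.stalkPoint.comp (i.transition j h)) i.stalkPoint) x

theorem point_of (i : EtaleNbhd R) (x : i.Stalk) : point (of i x) = i.stalkPoint x :=
  DirectLimit.Algebra.lift_of _ _ _ _ _

instance : IsLocalHom (point (R := R) : Henselization R →+* ResidueField R) where
  map_nonunit x hx := by
    obtain ⟨i, y, hy⟩ := exists_of_apply_eq fun _ : Unit => x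
    have hy' : i.stalkPoint (y ()) = point x := by rw [← hy (), point_of]
    have : IsUnit (y ()) := EtaleNbhd.isUnit_of_stalkPoint_ne_zero (hy' ▸ hx.ne_zero)
    exact hy () ▸ this.map (of i)

instance : IsLocalRing (Henselization R) :=
  (point (R := R) : Henselization R →+* ResidueField R).domain_isLocalRing

theorem subsingleton_algHom {C : Type*} [CommRing C] [Algebra R C]
    (hC : (maximalIdeal R).map (algebraMap R C) ≤ Ideal.jacobson ⊥) :
    Subsingleton (Henselization R →ₐ[R] C) where
  allEq _ _ := DirectLimit.Algebra.hom_ext _ fun i =>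
    have := i.subsingleton_stalk_algHom hC
    Subsingleton.elim _ _

theorem nonempty_algHom {C : Type*} [CommRing C] [Algebra R C] {J : Ideal C}
    [hJ : HenselianRing C J] (hC : (maximalIdeal R).map (algebraMap R C) ≤ J) :
    Nonempty (Henselization R →ₐ[R] C) := by
  have hker (a : R) (ha : a ∈ maximalIdeal R) : Algebra.ofId R (C ⧸ J) a = 0 :=
    Ideal.Quotient.eq_zero_iff_mem.mpr (hC (Ideal.mem_map_of_mem _ ha))
  let q : ResidueField R →ₐ[R] C ⧸ J := Ideal.Quotient.liftₐ _ (Algebra.ofId R (C ⧸ J)) hker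
  have hstalk (i : EtaleNbhd R) : Nonempty (i.Stalk →ₐ[R] C) := by
    obtain ⟨φ, hφ⟩ := exists_mkₐ_comp_eq (q.comp i.point)
    refine ⟨i.extend φ fun x hx => isUnit_of_isUnit_mk hJ.jac ?_⟩
    have hx' : Ideal.Quotient.mk J (φ x) = q (i.point x) := DFunLike.congr_fun hφ x
    exact hx' ▸ hx.isUnit.map q
  have (i : EtaleNbhd R) := i.subsingleton_stalk_algHom (hC.trans hJ.jac)
  exact ⟨DirectLimit.Algebra.lift _ _ _ (fun i => (hstalk i).some) fun i j h x =>
    DFunLike.congr_fun (Subsingleton.elim ((hstalk j).some.comp (i.transition j h)) _) x⟩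

instance : Module.Flat R (Henselization R) := by
  refine flat_of_forall_exists_flat fun f x hx => ?_
  obtain ⟨i, y, hy⟩ := exists_of_apply_eq x
  have hi : of i (∑ t, f t • y t) = 0 := by
    rw [map_sum, ← hx]
    exact Finset.sum_congr rfl fun t _ => by rw [map_smul, hy]
  obtain ⟨j, hij, hj⟩ := exists_transition_apply_eq_zero hi
  refine ⟨j.Stalk, inferInstance, inferInstance, inferInstance, (of j).toLinearMap,
    fun t => i.transition j hij (y t), fun t => (of_transition hij (y t)).trans (hy t), ?_⟩
  rw [← hj, map_sum]
  exact Finset.sum_congr rfl fun t _ => (map_smul _ _ _).symm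

theorem exists_point_comp_eq {E : Type*} [CommRing E] [Algebra R E] [Algebra.Etale R E]
    (pt : E →ₐ[R] ResidueField R) : ∃ φ : E →ₐ[R] Henselization R, point.comp φ = pt := by
  obtain ⟨i, φ, rfl⟩ := EtaleNbhd.exists_stalkPoint_comp_eq pt
  exact ⟨(of i).comp φ, AlgHom.ext fun x => point_of i (φ x)⟩

theorem algHom_ext_of_point_comp_eq {E : Type*} [CommRing E] [Algebra R E] [Algebra.Etale R E]
    {φ ψ : E →ₐ[R] Henselization R} (h : point.comp φ = point.comp ψ) : φ = ψ := by
  refine algHom_ext_of_formallyUnramified (maximalIdeal_le_jacobson _) fun s => ?_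
  rw [mem_maximalIdeal_iff_of_algHom_residueField point, map_sub, sub_eq_zero]
  exact DFunLike.congr_fun h s

theorem exists_etale_algHom_range {R : Type u} [CommRing R] [IsLocalRing R]
    {ι : Type*} [Finite ι] (x : ι → Henselization R) :
    ∃ (D : Type u) (_ : CommRing D) (_ : Algebra R D) (_ : Algebra.Etale R D)
      (ψ : D →ₐ[R] Henselization R), ∀ t, x t ∈ ψ.range := by
  obtain ⟨i, y, hy⟩ := exists_of_apply_eq x
  obtain ⟨b, -, ψ, hψ⟩ := exists_away_algHom_range (RingHom.ker i.point).primeCompl y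
  have : Algebra.Etale i.pair.Ring (Localization.Away b) := .of_isLocalizationAway b
  refine ⟨Localization.Away b, inferInstance, inferInstance, .comp R i.pair.Ring _,
    (of i).comp (ψ.restrictScalars R), fun t => ?_⟩
  obtain ⟨z, hz⟩ := hψ t
  exact ⟨z, (congrArg (of i) hz).trans (hy t)⟩

theorem exists_etale_map_eq {R : Type u} [CommRing R] [IsLocalRing R]
    {f : (Henselization R)[X]} (hf : f.Monic) :
    ∃ (D : Type u) (_ : CommRing D) (_ : Algebra R D) (_ : Algebra.Etale R D)
      (ψ : D →ₐ[R] Henselization R) (q : D[X]),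
      q.Monic ∧ q.map (ψ : D →+* Henselization R) = f := by
  obtain ⟨D, _, _, hD, ψ, hψ⟩ :=
    exists_etale_algHom_range fun t : Fin (f.natDegree + 1) => f.coeff t
  have hlifts : f ∈ Polynomial.lifts (ψ : D →+* Henselization R) := by
    rw [Polynomial.lifts_iff_coeff_lifts]
    intro n
    by_cases hn : n < f.natDegree + 1
    · exact hψ ⟨n, hn⟩
    · exact ⟨0, by rw [map_zero, Polynomial.coeff_eq_zero_of_natDegree_lt (by omega)]⟩
  obtain ⟨q, hq, -, hm⟩ := Polynomial.lifts_and_natDegree_eq_and_monic hlifts hf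
  exact ⟨D, _, _, hD, ψ, q, hm, hq⟩

instance : HenselianLocalRing (Henselization R) where
  is_henselian f hf a₀ h₀ h₁ := by
    obtain ⟨D, _, _, _, ψ, q, hq, rfl⟩ := exists_etale_map_eq hf
    have hpoint (p : D[X]) : p.eval₂ (point.comp ψ : D →+* ResidueField R) (point a₀) =
        point ((p.map (ψ : D →+* Henselization R)).eval a₀) := by
      rw [eval_map]
      exact (hom_eval₂ p _ (point (R := R) : Henselization R →+* ResidueField R) a₀).symm
    obtain ⟨E, _, _, _, φ, x, pt, hx, hφ, hpt⟩ := exists_etale_root (point.comp ψ) hq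
      (a := point a₀)
      (by rwa [hpoint, ← mem_maximalIdeal_iff_of_algHom_residueField point])
      (by rw [hpoint, ← derivative_map]; exact h₁.map point)
    obtain ⟨χ, rfl⟩ := exists_point_comp_eq pt
    have hχ : χ.comp φ = ψ := algHom_ext_of_point_comp_eq hφ
    refine ⟨χ x, ?_, ?_⟩
    · rw [IsRoot, eval_map, ← hχ]
      exact (hom_eval₂ q (φ : D →+* E) (χ : E →+* Henselization R) x).symm.trans
        ((congrArg χ hx).trans (map_zero χ))
    · rw [mem_maximalIdeal_iff_of_algHom_residueField point, map_sub, sub_eq_zero]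
      exact hpt

end Henselization

theorem map_map_algHom {A B C : Type*} [CommRing A] [CommRing B] [CommRing C] [Algebra A B]
    [Algebra A C] (I : Ideal A) (φ : B →ₐ[A] C) :
    (I.map (algebraMap A B)).map (φ : B →+* C) = I.map (algebraMap A C) := by
  rw [Ideal.map_map, AlgHom.comp_algebraMap]

namespace IsHenselization

variable {A B : Type u} [CommRing A] [CommRing B] [Algebra A B] {I : Ideal A}

theorem of_algHom (hB : HenselianRing B (I.map (algebraMap A B)))
    (h : ∀ (C : Type u) [CommRing C] [Algebra A C] (J : Ideal C) [HenselianRing C J],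
      I.map (algebraMap A C) ≤ J → Nonempty (B →ₐ[A] C) ∧ Subsingleton (B →ₐ[A] C)) :
    IsHenselization A B I := by
  refine ⟨hB, fun C _ _ J hJ hC => ?_⟩
  obtain ⟨⟨φ⟩, _⟩ := h C J hC
  exact ⟨φ, (map_map_algHom I φ).trans_le hC, fun ψ _ => Subsingleton.elim ψ φ⟩

section UniversalProperty

variable {C : Type u} [CommRing C] [Algebra A C] {J : Ideal C} [hJ : HenselianRing C J]

theorem nonempty_algHom (h : IsHenselization A B I) (hC : I.map (algebraMap A C) ≤ J) :
    Nonempty (B →ₐ[A] C) :=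
  let ⟨φ, _⟩ := h.2 C _ _ J hJ hC
  ⟨φ⟩

theorem subsingleton_algHom (h : IsHenselization A B I) (hC : I.map (algebraMap A C) ≤ J) :
    Subsingleton (B →ₐ[A] C) where
  allEq φ ψ := (h.2 C _ _ J hJ hC).unique ((map_map_algHom I φ).trans_le hC)
    ((map_map_algHom I ψ).trans_le hC)

end UniversalProperty

variable {B' : Type u} [CommRing B'] [Algebra A B']

theorem nonempty_algEquiv (h : IsHenselization A B I) (h' : IsHenselization A B' I) :
    Nonempty (B ≃ₐ[A] B') := by
  have := h.1
  have := h'.1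
  have := h.subsingleton_algHom (C := B) le_rfl
  have := h'.subsingleton_algHom (C := B') le_rfl
  obtain ⟨φ⟩ := h.nonempty_algHom (C := B') le_rfl
  obtain ⟨ψ⟩ := h'.nonempty_algHom (C := B) le_rfl
  exact ⟨.ofAlgHom φ ψ (Subsingleton.elim _ _) (Subsingleton.elim _ _)⟩

theorem of_algEquiv (h : IsHenselization A B I) (e : B ≃ₐ[A] B') : IsHenselization A B' I := by
  refine of_algHom ?_ fun C _ _ J _ hC => ⟨?_, ⟨fun φ ψ => ?_⟩⟩
  · have hmap : (I.map (algebraMap A B)).map (e.toRingEquiv : B →+* B') =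
        I.map (algebraMap A B') :=
      map_map_algHom I (e : B →ₐ[A] B')
    have := h.1
    exact hmap ▸ henselianRing_map_ringEquiv e.toRingEquiv
  · obtain ⟨φ⟩ := h.nonempty_algHom hC
    exact ⟨φ.comp e.symm⟩
  · have := h.subsingleton_algHom hC
    exact (AlgHom.cancel_right e.surjective).mp
      (Subsingleton.elim (φ.comp (e : B →ₐ[A] B')) (ψ.comp (e : B →ₐ[A] B')))

end IsHenselization

theorem isHenselization_henselization (R : Type u) [CommRing R] [IsLocalRing R] :
    IsHenselization R (Henselization R) (maximalIdeal R) := by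
  refine .of_algHom (henselianRing_of_isIntegral (H := Henselization R) ?_) fun C _ _ J hJ hC =>
    ⟨Henselization.nonempty_algHom hC, Henselization.subsingleton_algHom (hC.trans hJ.jac)⟩
  refine le_trans ?_ (maximalIdeal_le_jacobson _)
  refine Ideal.map_le_iff_le_comap.mpr fun r hr => ?_
  rw [Ideal.mem_comap, mem_maximalIdeal_iff_of_algHom_residueField Henselization.point,
    AlgHom.commutes]
  exact (residue_eq_zero_iff r).mpr hr

section TensorProduct

attribute [local instance] Algebra.TensorProduct.rightAlgebra

namespace IsHenselization

variable {R A H : Type u} [CommRing R] [IsLocalRing R] [CommRing A] [CommRing H] [Algebra R A]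
  [Algebra R H] [Algebra.IsIntegral R A]

theorem tensorProduct [HenselianLocalRing H] (hH : IsHenselization R H (maximalIdeal R)) :
    IsHenselization A (A ⊗[R] H) (Ideal.jacobson ⊥) := by
  have : Algebra.IsIntegral H (A ⊗[R] H) :=
    (Algebra.TensorProduct.commRight R H A).isIntegral_iff.mp inferInstance
  refine of_algHom (henselianRing_of_isIntegral (H := H) ?_) fun C _ _ J hJ hC => ?_
  · calc (Ideal.jacobson ⊥).map (algebraMap A (A ⊗[R] H))
      _ ≤ ((maximalIdeal R).map (algebraMap R A)).radical.map (algebraMap A (A ⊗[R] H)) :=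
        Ideal.map_mono jacobson_bot_le_radical_map_maximalIdeal
      _ ≤ (((maximalIdeal R).map (algebraMap R A)).map (algebraMap A (A ⊗[R] H))).radical :=
        Ideal.map_radical_le _
      _ = (((maximalIdeal R).map (algebraMap R H)).map (algebraMap H (A ⊗[R] H))).radical := by
        simp only [Ideal.map_map, ← IsScalarTower.algebraMap_eq]
      _ ≤ (Ideal.jacobson ⊥).radical :=
        Ideal.radical_mono ((Ideal.map_mono hH.1.jac).trans map_jacobson_bot_le)
      _ = Ideal.jacobson ⊥ := (Ideal.isRadical_jacobson ⊥).radical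
  · let : Algebra R C := ((algebraMap A C).comp (algebraMap R A)).toAlgebra
    have : IsScalarTower R A C := .of_algebraMap_eq' rfl
    have hRC : (maximalIdeal R).map (algebraMap R C) ≤ J := by
      rw [IsScalarTower.algebraMap_eq R A C, ← Ideal.map_map]
      exact (Ideal.map_mono map_maximalIdeal_le_jacobson_bot).trans hC
    have := hH.subsingleton_algHom hRC
    obtain ⟨φ⟩ := hH.nonempty_algHom hRC
    exact ⟨⟨Algebra.TensorProduct.lift (Algebra.ofId A C) φ fun _ _ => .all _ _⟩,
      ⟨fun _ _ => Algebra.TensorProduct.ext (Subsingleton.elim _ _) (Subsingleton.elim _ _)⟩⟩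

end IsHenselization

end TensorProduct

section Invariants

variable {R A H G : Type*} [CommRing R] [CommRing A] [CommRing H] [Algebra R A] [Algebra R H]
  [Group G] [MulSemiringAction G A] [SMulCommClass G R A]

theorem exists_one_tmul_eq_of_forall_map_smul_eq [Finite G] [Algebra.IsInvariant R A G]
    [Module.Flat R H] {z : A ⊗[R] H}
    (hz : ∀ g : G, Algebra.TensorProduct.map (MulSemiringAction.toAlgHom R A g) (.id R H) z = z) :
    ∃ h : H, 1 ⊗ₜ h = z := by
  classical
  cases nonempty_fintype G
  let d : A →ₗ[R] G → A :=
    .pi fun g => (MulSemiringAction.toAlgHom R A g).toLinearMap - .id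
  have hd : Function.Exact (Algebra.linearMap R A) d := fun a => by
    refine ⟨fun ha => Algebra.IsInvariant.isInvariant (G := G) a fun g => ?_, ?_⟩
    · exact sub_eq_zero.mp (congrFun ha g)
    · rintro ⟨r, rfl⟩
      ext g
      simp [d]
  have hdz : d.rTensor H z = 0 := by
    refine (TensorProduct.piLeft R H fun _ : G => A).injective (funext fun g => ?_)
    have hd' (w : A ⊗[R] H) : TensorProduct.piLeft R H (fun _ : G => A) (d.rTensor H w) g =
        Algebra.TensorProduct.map (MulSemiringAction.toAlgHom R A g) (.id R H) w - w := by
      induction w with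
      | zero => simp
      | tmul a h => simp [d, TensorProduct.sub_tmul]
      | add x y hx hy => simp only [map_add, Pi.add_apply, hx, hy, add_sub_add_comm]
    rw [hd', hz, sub_self, map_zero, Pi.zero_apply]
  obtain ⟨w, rfl⟩ := (Module.Flat.rTensor_exact H hd z).mp hdz
  obtain ⟨h, rfl⟩ := (TensorProduct.lid R H).symm.surjective w
  exact ⟨h, by simp⟩

end Invariants

section FixedSubring

instance (G A : Type*) [Group G] [CommRing A] [MulSemiringAction G A] :
    Algebra.IsInvariant (fixedSubring G A) A G where
  isInvariant a ha := ⟨⟨a, ha⟩, rfl⟩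

instance (G A : Type*) [Group G] [CommRing A] [MulSemiringAction G A] :
    SMulCommClass G (fixedSubring G A) A where
  smul_comm g r a := by
    rw [Subring.smul_def, Subring.smul_def, smul_eq_mul, smul_eq_mul, smul_mul', r.2 g]

section BaseChange

variable {R A B H G : Type*} [CommRing R] [CommRing A] [CommRing B] [CommRing H] [Algebra R A]
  [Algebra R H] [Algebra A B] [Group G] [MulSemiringAction G A] [SMulCommClass G R A]
  [MulSemiringAction G B]

theorem algEquiv_map_smul
    (hcompat : ∀ (g : G) (a : A), algebraMap A B (g • a) = g • algebraMap A B a)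
    (e : A ⊗[R] H ≃ₐ[A] B) (he : ∀ (g : G) (x : H), g • e (1 ⊗ₜ x) = e (1 ⊗ₜ x)) (g : G)
    (z : A ⊗[R] H) :
    e (Algebra.TensorProduct.map (MulSemiringAction.toAlgHom R A g) (.id R H) z) = g • e z := by
  have htmul (a : A) (x : H) : e (a ⊗ₜ x) = algebraMap A B a * e (1 ⊗ₜ x) := by
    rw [← Algebra.smul_def, ← map_smul, TensorProduct.smul_tmul', smul_eq_mul, mul_one]
  induction z with
  | zero => simp
  | tmul a x =>
    rw [Algebra.TensorProduct.map_tmul, htmul, htmul a, smul_mul', he, ← hcompat]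
    rfl
  | add x y hx hy => simp only [map_add, smul_add, hx, hy]

variable [Algebra R B] [IsScalarTower R A B]

theorem smulCommClass_of_algebraMap_smul
    (hcompat : ∀ (g : G) (a : A), algebraMap A B (g • a) = g • algebraMap A B a) :
    SMulCommClass G R B where
  smul_comm g r b := by
    rw [Algebra.smul_def, Algebra.smul_def, smul_mul', IsScalarTower.algebraMap_apply R A B,
      ← hcompat, smul_algebraMap]

theorem nonempty_algEquiv_fixedSubring [Finite G] [Algebra.IsInvariant R A G] [FaithfulSMul R A]
    [Module.Flat R H] [Algebra R (fixedSubring G B)] [IsScalarTower R (fixedSubring G B) B]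
    (hcompat : ∀ (g : G) (a : A), algebraMap A B (g • a) = g • algebraMap A B a)
    (e : A ⊗[R] H ≃ₐ[A] B) (he : ∀ (g : G) (x : H), g • e (1 ⊗ₜ x) = e (1 ⊗ₜ x)) :
    Nonempty (H ≃ₐ[R] fixedSubring G B) := by
  let j : H →ₐ[R] B :=
    (e.restrictScalars R : A ⊗[R] H →ₐ[R] B).comp Algebra.TensorProduct.includeRight
  let j' : H →ₐ[R] fixedSubring G B :=
    { (j : H →+* B).codRestrict (fixedSubring G B) fun x g => he g x with
      commutes' r := Subtype.ext <|
        (j.commutes r).trans (IsScalarTower.algebraMap_apply R (fixedSubring G B) B r) }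
  have hj : Function.Injective j := e.injective.comp
    (Algebra.TensorProduct.includeRight_injective (FaithfulSMul.algebraMap_injective R A))
  refine ⟨.ofBijective j' ⟨fun x y h => hj (congrArg Subtype.val h), fun b => ?_⟩⟩
  obtain ⟨z, hz⟩ := e.surjective b
  obtain ⟨x, rfl⟩ := exists_one_tmul_eq_of_forall_map_smul_eq (G := G) (z := z) fun g =>
    e.injective (by rw [algEquiv_map_smul hcompat e he, hz, b.2 g])
  exact ⟨x, Subtype.ext hz⟩

end BaseChange

theorem isHenselization_fixedSubring {R A B : Type u} {G : Type*} [CommRing R] [IsLocalRing R]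
    [CommRing A] [CommRing B] [Algebra R A] [Algebra A B] [Algebra R B] [IsScalarTower R A B]
    [Group G] [Finite G] [MulSemiringAction G A] [SMulCommClass G R A] [Algebra.IsInvariant R A G]
    [FaithfulSMul R A] [MulSemiringAction G B] [Algebra R (fixedSubring G B)]
    [IsScalarTower R (fixedSubring G B) B]
    (hcompat : ∀ (g : G) (a : A), algebraMap A B (g • a) = g • algebraMap A B a)
    (hB : IsHenselization A B (Ideal.jacobson ⊥)) :
    IsHenselization R (fixedSubring G B) (maximalIdeal R) := by
  have : Algebra.IsIntegral R A := Algebra.IsInvariant.isIntegral R A G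
  have : SMulCommClass G R B := smulCommClass_of_algebraMap_smul hcompat
  have hH := isHenselization_henselization R
  obtain ⟨e⟩ := hH.tensorProduct.nonempty_algEquiv hB
  have hRB : (maximalIdeal R).map (algebraMap R B) ≤
      (Ideal.jacobson ⊥).map (algebraMap A B) := by
    rw [IsScalarTower.algebraMap_eq R A B, ← Ideal.map_map]
    exact Ideal.map_mono map_maximalIdeal_le_jacobson_bot
  have := Henselization.subsingleton_algHom (hRB.trans hB.1.jac)
  let j : Henselization R →ₐ[R] B :=
    (e.restrictScalars R : A ⊗[R] Henselization R →ₐ[R] B).comp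
      Algebra.TensorProduct.includeRight
  obtain ⟨e'⟩ := nonempty_algEquiv_fixedSubring hcompat e fun g x =>
    DFunLike.congr_fun (Subsingleton.elim ((MulSemiringAction.toAlgHom R B g).comp j) j) x
  exact hH.of_algEquiv e'

end FixedSubring

section Orbit

variable {G A : Type*} [Group G] [CommRing A] [MulSemiringAction G A] {m : Ideal A}

theorem iInf_comap_toRingHom_eq_jacobson_bot [m.IsMaximal]
    (horb : ∀ m' : Ideal A, m'.IsMaximal →
      ∃ g : G, m' = Ideal.comap (MulSemiringAction.toRingHom G A g) m) :
    ⨅ g : G, Ideal.comap (MulSemiringAction.toRingHom G A g) m = Ideal.jacobson ⊥ := by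
  refine le_antisymm (le_sInf fun M ⟨_, hM⟩ => ?_) (le_iInf fun g => sInf_le ⟨bot_le, ?_⟩)
  · obtain ⟨g, rfl⟩ := horb M hM
    exact iInf_le _ g
  · exact Ideal.comap_isMaximal_of_surjective _ (MulAction.surjective g)

theorem isLocalRing_fixedSubring [Finite G] [m.IsMaximal]
    (horb : ∀ m' : Ideal A, m'.IsMaximal →
      ∃ g : G, m' = Ideal.comap (MulSemiringAction.toRingHom G A g) m) :
    IsLocalRing (fixedSubring G A) := by
  have : Algebra.IsIntegral (fixedSubring G A) A := Algebra.IsInvariant.isIntegral _ A G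
  refine .of_unique_max_ideal ⟨m.comap (algebraMap _ A),
    Ideal.isMaximal_comap_of_isIntegral_of_isMaximal m, fun M hM => ?_⟩
  obtain ⟨m', hm', rfl⟩ := Ideal.exists_ideal_over_maximal_of_isIntegral M
    ((FaithfulSMul.ker_algebraMap_eq_bot _ A).trans_le bot_le)
  obtain ⟨g, rfl⟩ := horb m' hm'
  ext r
  exact iff_of_eq (congrArg (· ∈ m) (r.2 g))

end Orbit

/-- Let `G` be a finite group acting on a scheme `X` whose geometric
quotient `X/G` exists as a scheme, and let `x ∈ X`.  Then `(X^h_{Gx})/G ≅ (X/G)^h_{[x]}`.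
Algebraically:  let `A` be the semilocal ring of the orbit `G·x` (so the maximal ideals of
`A` form the single `G`-orbit of `m`, `X/G = Spec Aᴳ` locally) and let `B` be the
henselization of `A` along the ideal `I = ⨅_g g·m` of the orbit, equipped with its induced
`G`-action.  Then the fixed subring `Bᴳ` is a henselization of `Aᴳ` along the restricted
ideal, i.e. `Spec Bᴳ = (X^h_{Gx})/G` is the henselization of `X/G` at `[x]`. -/
theorem fixed_ring_of_equivariant_henselization_is_henselization_of_quotient
    (G : Type u) [Group G] [Finite G] (A : Type u) [CommRing A] [MulSemiringAction G A]
    (m : Ideal A) [m.IsMaximal]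
    (horb : ∀ m' : Ideal A, m'.IsMaximal →
      ∃ g : G, m' = Ideal.comap (MulSemiringAction.toRingHom G A g) m)
    (B : Type u) [CommRing B] [Algebra A B] [MulSemiringAction G B]
    (hcompat : ∀ (g : G) (a : A), algebraMap A B (g • a) = g • algebraMap A B a)
    (hB : IsHenselization A B (⨅ g : G, Ideal.comap (MulSemiringAction.toRingHom G A g) m)) :
    letI : Algebra (fixedSubring G A) (fixedSubring G B) := (fixedMap hcompat).toAlgebra
    IsHenselization (fixedSubring G A) (fixedSubring G B)
      (Ideal.comap (fixedSubring G A).subtype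
        (⨅ g : G, Ideal.comap (MulSemiringAction.toRingHom G A g) m)) := by
  have := isLocalRing_fixedSubring horb
  have : Algebra.IsIntegral (fixedSubring G A) A := Algebra.IsInvariant.isIntegral _ A G
  have : Nontrivial A := (Subtype.val_injective (p := (· ∈ fixedSubring G A))).nontrivial
  let : Algebra (fixedSubring G A) (fixedSubring G B) := (fixedMap hcompat).toAlgebra
  let : Algebra (fixedSubring G A) B := .compHom B (fixedSubring G A).subtype
  have : IsScalarTower (fixedSubring G A) A B := .of_algebraMap_eq' rfl
  have : IsScalarTower (fixedSubring G A) (fixedSubring G B) B := .of_algebraMap_eq' rfl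
  rw [iInf_comap_toRingHom_eq_jacobson_bot horb] at hB ⊢
  have hmax : (Ideal.jacobson ⊥).comap (fixedSubring G A).subtype =
      maximalIdeal (fixedSubring G A) :=
    comap_jacobson_bot
  exact hmax ▸ isHenselization_fixedSubring hcompat hB
end
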